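/- arXiv:1501.00423 — 2 statements merged into one kernel-verified Lean document; each statement's English description precedes it below -/
import Mathlib

section
/- Let Ω ⊂ ℝⁿ be a bounded connected open set whose signed distance function d is C² on a neighborhood of ∂Ω. Assume condition (reg22) (uniform continuity of b), condition (reg2) (β-Hölder continuity of σ with β ∈ (1/2,1]), condition (invariance), and that F satisfies the Strong Minimum Principle in Ω (every lower semicontinuous viscosity supersolution of F[u]=0 attaining its minimum over Ω at an interior point is constant). If v : Ω → ℝ is lower semicontinuous, is a viscosity supersolution of F[v]=0 in Ω, and satisfies liminf_{x→∂Ω} v(x)/(−log d(x)) ≥ 0, then v is constant. -/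
open scoped InnerProductSpace Matrix
open Filter

noncomputable section

/-- The signed distance to the boundary of `Ω`:
`d(x) = dist(x, Ωᶜ) - dist(x, closure Ω)`. -/
def sdist {n : ℕ} (Ω : Set (EuclideanSpace ℝ (Fin n))) (x : EuclideanSpace ℝ (Fin n)) : ℝ :=
  Metric.infDist x Ωᶜ - Metric.infDist x (closure Ω)

/-- The distance to the topological boundary of `Ω`. -/
def bdist {n : ℕ} (Ω : Set (EuclideanSpace ℝ (Fin n))) (x : EuclideanSpace ℝ (Fin n)) : ℝ :=
  Metric.infDist x (frontier Ω)

/-- The Frobenius (Euclidean) norm of a matrix. -/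
def mnorm {n r : ℕ} (M : Matrix (Fin n) (Fin r) ℝ) : ℝ :=
  Real.sqrt (∑ i, ∑ j, M i j ^ 2)

/-- The quadratic form `v ↦ v ⬝ X v`. -/
def quadForm {n : ℕ} (X : Matrix (Fin n) (Fin n) ℝ) (v : EuclideanSpace ℝ (Fin n)) : ℝ :=
  ∑ i, ∑ j, X i j * v i * v j

/-- `Mᵀ v` as a vector in `ℝʳ` (used for `σ(x,α)ᵀ Dd(x)`). -/
def sigmaT {n r : ℕ} (M : Matrix (Fin n) (Fin r) ℝ) (v : EuclideanSpace ℝ (Fin n)) :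
    Fin r → ℝ :=
  Matrix.mulVec Mᵀ (fun i => v i)

/-- The second-order superjet of `u` at `x` relative to `S`. -/
def J2plus {n : ℕ} (S : Set (EuclideanSpace ℝ (Fin n))) (u : EuclideanSpace ℝ (Fin n) → ℝ)
    (x : EuclideanSpace ℝ (Fin n)) :
    Set (EuclideanSpace ℝ (Fin n) × Matrix (Fin n) (Fin n) ℝ) :=
  { pX | pX.2.IsSymm ∧ ∀ ε > (0 : ℝ), ∀ᶠ y in nhdsWithin x S,
      u y - u x - ⟪pX.1, y - x⟫_ℝ - (1 / 2) * quadForm pX.2 (y - x) ≤ ε * ‖y - x‖ ^ 2 }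

/-- The second-order subjet of `u` at `x` relative to `S`: `J^{2,-}u = -J^{2,+}(-u)`. -/
def J2minus {n : ℕ} (S : Set (EuclideanSpace ℝ (Fin n))) (u : EuclideanSpace ℝ (Fin n) → ℝ)
    (x : EuclideanSpace ℝ (Fin n)) :
    Set (EuclideanSpace ℝ (Fin n) × Matrix (Fin n) (Fin n) ℝ) :=
  { qZ | (-qZ.1, -qZ.2) ∈ J2plus S (fun y => -u y) x }

/-- The first-order superdifferential of `u` at `x` relative to `S`. -/
def D1plus {n : ℕ} (S : Set (EuclideanSpace ℝ (Fin n))) (u : EuclideanSpace ℝ (Fin n) → ℝ)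
    (x : EuclideanSpace ℝ (Fin n)) : Set (EuclideanSpace ℝ (Fin n)) :=
  { q | ∀ ε > (0 : ℝ), ∀ᶠ y in nhdsWithin x S, u y - u x - ⟪q, y - x⟫_ℝ ≤ ε * ‖y - x‖ }

/-- The Bellman operator `F(x,p,X) = sup_{α ∈ A} (-b(x,α)·p - tr(σσᵀ X))`. -/
def Fop {n m r : ℕ} (A : Set (Fin m → ℝ))
    (b : EuclideanSpace ℝ (Fin n) → (Fin m → ℝ) → EuclideanSpace ℝ (Fin n))
    (σ : EuclideanSpace ℝ (Fin n) → (Fin m → ℝ) → Matrix (Fin n) (Fin r) ℝ)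
    (x p : EuclideanSpace ℝ (Fin n)) (X : Matrix (Fin n) (Fin n) ℝ) : ℝ :=
  sSup ((fun α => -⟪b x α, p⟫_ℝ - Matrix.trace (σ x α * (σ x α)ᵀ * X)) '' A)

/-- The Hamiltonian `H(x,p,X) = sup_{α ∈ A} (-b(x,α)·p - tr(σσᵀ X) - l(x,α))`. -/
def Hop {n m r : ℕ} (A : Set (Fin m → ℝ))
    (b : EuclideanSpace ℝ (Fin n) → (Fin m → ℝ) → EuclideanSpace ℝ (Fin n))
    (σ : EuclideanSpace ℝ (Fin n) → (Fin m → ℝ) → Matrix (Fin n) (Fin r) ℝ)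
    (l : EuclideanSpace ℝ (Fin n) → (Fin m → ℝ) → ℝ)
    (x p : EuclideanSpace ℝ (Fin n)) (X : Matrix (Fin n) (Fin n) ℝ) : ℝ :=
  sSup ((fun α => -⟪b x α, p⟫_ℝ - Matrix.trace (σ x α * (σ x α)ᵀ * X) - l x α) '' A)

/-- The set of projections of `x` onto `∂Ω`. -/
def projSet {n : ℕ} (Ω : Set (EuclideanSpace ℝ (Fin n))) (x : EuclideanSpace ℝ (Fin n)) :
    Set (EuclideanSpace ℝ (Fin n)) :=
  { z | z ∈ frontier Ω ∧ dist x z = bdist Ω x }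

/-- The interior normal directions at a boundary point `z`. -/
def normalDirs {n : ℕ} (Ω : Set (EuclideanSpace ℝ (Fin n))) (z : EuclideanSpace ℝ (Fin n)) :
    Set (EuclideanSpace ℝ (Fin n)) :=
  { ν | ‖ν‖ = 1 ∧ ∃ x ∈ Ω, x = z + bdist Ω x • ν }

theorem inner_sum' {n : ℕ} (x y : EuclideanSpace ℝ (Fin n)) :
    ⟪x, y⟫_ℝ = ∑ i, x i * y i := by
  simp [PiLp.inner_apply, mul_comm]

theorem inner_toLin {n : ℕ} (Z : Matrix (Fin n) (Fin n) ℝ) (u w : EuclideanSpace ℝ (Fin n)) :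
    ⟪Matrix.toEuclideanLin Z u, w⟫_ℝ = ∑ i, ∑ j, Z i j * w i * u j := by
  rw [inner_sum']
  refine Finset.sum_congr rfl fun i _ => ?_
  simp only [Matrix.toLpLin_apply, Matrix.mulVec, dotProduct, Finset.sum_mul]
  refine Finset.sum_congr rfl fun j _ => ?_
  ring

theorem quadForm_eq {n : ℕ} (Z : Matrix (Fin n) (Fin n) ℝ) (u : EuclideanSpace ℝ (Fin n)) :
    quadForm Z u = ⟪Matrix.toEuclideanLin Z u, u⟫_ℝ := by
  rw [inner_toLin]; rfl

theorem symm_of_hess {n : ℕ} {φ : EuclideanSpace ℝ (Fin n) → ℝ}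
    {G : EuclideanSpace ℝ (Fin n) → EuclideanSpace ℝ (Fin n)} {Z : Matrix (Fin n) (Fin n) ℝ}
    {x : EuclideanSpace ℝ (Fin n)}
    (h1 : ∀ᶠ y in nhds x, HasGradientAt φ (G y) y)
    (h2 : HasFDerivAt G (LinearMap.toContinuousLinearMap (Matrix.toEuclideanLin Z)) x) :
    ∀ u w, ⟪Matrix.toEuclideanLin Z u, w⟫_ℝ = ⟪Matrix.toEuclideanLin Z w, u⟫_ℝ := by
  have h3 : ∀ᶠ y in nhds x, HasFDerivAt φ ((innerSL ℝ) (G y)) y := by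
    filter_upwards [h1] with y hy
    exact hy.hasFDerivAt
  have h4 : HasFDerivAt (fun y => (innerSL ℝ) (G y))
      ((innerSL ℝ).comp (LinearMap.toContinuousLinearMap (Matrix.toEuclideanLin Z))) x :=
    (innerSL ℝ (E := EuclideanSpace ℝ (Fin n))).hasFDerivAt.comp x h2
  intro u w
  simpa using second_derivative_symmetric_of_eventually h3 h4 u w

theorem isSymm_of_hess {n : ℕ} {φ : EuclideanSpace ℝ (Fin n) → ℝ}
    {G : EuclideanSpace ℝ (Fin n) → EuclideanSpace ℝ (Fin n)} {Z : Matrix (Fin n) (Fin n) ℝ}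
    {x : EuclideanSpace ℝ (Fin n)}
    (h1 : ∀ᶠ y in nhds x, HasGradientAt φ (G y) y)
    (h2 : HasFDerivAt G (LinearMap.toContinuousLinearMap (Matrix.toEuclideanLin Z)) x) :
    Z.IsSymm := by
  have h := symm_of_hess h1 h2
  ext i j
  have := h (EuclideanSpace.single i 1) (EuclideanSpace.single j 1)
  rw [inner_toLin, inner_toLin] at this
  simpa [Pi.single_apply] using this

theorem taylor2 {n : ℕ} {φ : EuclideanSpace ℝ (Fin n) → ℝ}
    {G : EuclideanSpace ℝ (Fin n) → EuclideanSpace ℝ (Fin n)} {Z : Matrix (Fin n) (Fin n) ℝ}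
    {x : EuclideanSpace ℝ (Fin n)}
    (h1 : ∀ᶠ y in nhds x, HasGradientAt φ (G y) y)
    (h2 : HasFDerivAt G (LinearMap.toContinuousLinearMap (Matrix.toEuclideanLin Z)) x)
    {η : ℝ} (hη : 0 < η) :
    ∀ᶠ y in nhds x,
      |φ y - φ x - ⟪G x, y - x⟫_ℝ - (1 / 2) * quadForm Z (y - x)| ≤ η * ‖y - x‖ ^ 2 := by
  have hs := symm_of_hess h1 h2
  set T := LinearMap.toContinuousLinearMap (Matrix.toEuclideanLin Z) with hT
  have hTa : ∀ u, T u = Matrix.toEuclideanLin Z u := fun u => rfl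
  have h5 := h2.isLittleO.bound hη
  obtain ⟨ρ, hρ, hball⟩ := Metric.eventually_nhds_iff_ball.1 (h1.and h5)
  refine Metric.eventually_nhds_iff_ball.2 ⟨ρ, hρ, fun y hy => ?_⟩
  let R : EuclideanSpace ℝ (Fin n) → ℝ := fun y =>
    φ y - ⟪G x, y - x⟫_ℝ - (1 / 2) * ⟪T (y - x), y - x⟫_ℝ
  have hsub : Metric.closedBall x ‖y - x‖ ⊆ Metric.ball x ρ := by
    intro w hw
    rw [Metric.mem_ball, dist_eq_norm] at *
    rw [Metric.mem_closedBall, dist_eq_norm] at hw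
    linarith
  have hR : ∀ w ∈ Metric.closedBall x ‖y - x‖,
      HasFDerivWithinAt R ((innerSL ℝ) (G w - G x - T (w - x))) (Metric.closedBall x ‖y - x‖) w := by
    intro w hw
    have hg : HasFDerivAt φ ((innerSL ℝ) (G w)) w := (hball w (hsub hw)).1.hasFDerivAt
    have hid : HasFDerivAt (fun w : EuclideanSpace ℝ (Fin n) => w - x)
      (ContinuousLinearMap.id ℝ _) w := (hasFDerivAt_id w).sub_const x
    have hTd : HasFDerivAt (fun w : EuclideanSpace ℝ (Fin n) => T (w - x)) T w := by
      exact (T.hasFDerivAt.comp w hid).congr_fderiv (by ext u; rfl)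
    have hA := (hasFDerivAt_const (G x) w).inner ℝ hid
    have hB := hTd.inner ℝ hid
    have := (hg.sub hA).sub (hB.const_mul (1/2))
    refine (this.congr_fderiv ?_).hasFDerivWithinAt
    ext u
    have e : ⟪T u, w - x⟫_ℝ = ⟪T (w - x), u⟫_ℝ := by simpa only [hTa] using hs u (w - x)
    simp only [ContinuousLinearMap.sub_apply, ContinuousLinearMap.smul_apply,
      ContinuousLinearMap.comp_apply, ContinuousLinearMap.prod_apply, fderivInnerCLM_apply,
      ContinuousLinearMap.zero_apply, ContinuousLinearMap.id_apply, innerSL_apply_apply, e,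
      inner_zero_left, smul_eq_mul]
    rw [inner_sub_left, inner_sub_left]
    ring
  have hbd : ∀ w ∈ Metric.closedBall x ‖y - x‖,
      ‖(innerSL ℝ) (G w - G x - T (w - x))‖ ≤ η * ‖y - x‖ := by
    intro w hw
    rw [innerSL_apply_norm]
    refine (hball w (hsub hw)).2.trans ?_
    rw [Metric.mem_closedBall, dist_eq_norm] at hw
    gcongr
  have hmain := (convex_closedBall x ‖y - x‖).norm_image_sub_le_of_norm_hasFDerivWithin_le
    (f := R) hR hbd (Metric.mem_closedBall_self (norm_nonneg _))
    (by rw [Metric.mem_closedBall, dist_eq_norm])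
  rw [quadForm_eq]
  simp only [R, sub_self, inner_zero_right, map_zero, Real.norm_eq_abs] at hmain
  calc _ = _ := by congr 1; simp only [hTa]; ring
    _ ≤ _ := hmain
    _ = _ := by ring

theorem trace_vec {n r : ℕ} (S : Matrix (Fin n) (Fin r) ℝ) (p : EuclideanSpace ℝ (Fin n)) :
    Matrix.trace (S * Sᵀ * Matrix.vecMulVec (fun i => p i) (fun i => p i))
      = ∑ j, (sigmaT S p j) ^ 2 := by
  rw [Matrix.mul_vecMulVec, Matrix.trace_vecMulVec, ← Matrix.mulVec_mulVec,
    dotProduct_comm, Matrix.dotProduct_mulVec, ← Matrix.mulVec_transpose]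
  simp [dotProduct, sigmaT, pow_two]

theorem sigmaT_sq_le {n r : ℕ} (S : Matrix (Fin n) (Fin r) ℝ) (p : EuclideanSpace ℝ (Fin n)) :
    ∑ j, (sigmaT S p j) ^ 2 ≤ mnorm S ^ 2 * ‖p‖ ^ 2 := by
  rw [mnorm, Real.sq_sqrt (by positivity), EuclideanSpace.norm_sq_eq, Finset.sum_comm,
    Finset.sum_mul]
  refine Finset.sum_le_sum fun j _ => ?_
  have := Finset.sum_mul_sq_le_sq_mul_sq Finset.univ (fun i => S i j) (fun i => p i)
  simpa [sigmaT, Matrix.mulVec, dotProduct] using this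

theorem sdist_cont {n : ℕ} (Ω : Set (EuclideanSpace ℝ (Fin n))) : Continuous (sdist Ω) :=
  (Metric.continuous_infDist_pt _).sub (Metric.continuous_infDist_pt _)

theorem sdist_eq {n : ℕ} {Ω : Set (EuclideanSpace ℝ (Fin n))} {x : EuclideanSpace ℝ (Fin n)}
    (hx : x ∈ closure Ω) : sdist Ω x = Metric.infDist x Ωᶜ := by
  rw [sdist, Metric.infDist_zero_of_mem hx, sub_zero]

theorem sdist_pos {n : ℕ} {Ω : Set (EuclideanSpace ℝ (Fin n))} (hΩo : IsOpen Ω)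
    (hc : Ωᶜ.Nonempty) {x : EuclideanSpace ℝ (Fin n)} (hx : x ∈ Ω) : 0 < sdist Ω x := by
  rw [sdist_eq (subset_closure hx)]
  exact (hΩo.isClosed_compl.notMem_iff_infDist_pos hc).1 (by simpa using hx)

theorem mem_of_sdist_pos {n : ℕ} {Ω : Set (EuclideanSpace ℝ (Fin n))}
    {x : EuclideanSpace ℝ (Fin n)} (hx : 0 < sdist Ω x) : x ∈ Ω := by
  by_contra h
  have : Metric.infDist x Ωᶜ = 0 := Metric.infDist_zero_of_mem h
  rw [sdist, this] at hx
  have := Metric.infDist_nonneg (x := x) (s := closure Ω)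
  linarith

theorem exists_proj {n : ℕ} {Ω : Set (EuclideanSpace ℝ (Fin n))} (hΩo : IsOpen Ω)
    (hc : Ωᶜ.Nonempty) {x : EuclideanSpace ℝ (Fin n)} (hx : x ∈ Ω) :
    ∃ z ∈ frontier Ω, sdist Ω x = ‖x - z‖ := by
  obtain ⟨z, hz, hd⟩ := hΩo.isClosed_compl.exists_infDist_eq_dist hc x
  have hp := sdist_pos hΩo hc hx
  rw [sdist_eq (subset_closure hx)] at hp
  refine ⟨z, ⟨?_, ?_⟩, ?_⟩
  · have h1 : closure (Metric.ball x (Metric.infDist x Ωᶜ)) ⊆ closure Ω :=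
      closure_mono Metric.ball_infDist_compl_subset
    rw [closure_ball x hp.ne'] at h1
    exact h1 (by rw [Metric.mem_closedBall, dist_comm, hd])
  · rw [hΩo.interior_eq]; exact hz
  · rw [sdist_eq (subset_closure hx), hd, dist_eq_norm]

theorem grad_eq {n : ℕ} {Ω : Set (EuclideanSpace ℝ (Fin n))} (hΩo : IsOpen Ω)
    (hc : Ωᶜ.Nonempty) {δ₀ : ℝ} (hδ₀ : 0 < δ₀)
    {Dd : EuclideanSpace ℝ (Fin n) → EuclideanSpace ℝ (Fin n)}
    (hDd : ∀ x, |sdist Ω x| < δ₀ → HasGradientAt (sdist Ω) (Dd x) x)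
    (hDdnorm : ∀ x, |sdist Ω x| < δ₀ → ‖Dd x‖ = 1)
    {x z : EuclideanSpace ℝ (Fin n)} (hx : x ∈ Ω) (hxd : sdist Ω x < δ₀)
    (hz : z ∈ frontier Ω) (hd : sdist Ω x = ‖x - z‖) : Dd x = Dd z := by
  have hp := sdist_pos hΩo hc hx
  have hzc : z ∈ Ωᶜ := by
    have := hz.2
    rwa [hΩo.interior_eq] at this
  have hz0 : sdist Ω z = 0 := by
    rw [sdist_eq hz.1, Metric.infDist_zero_of_mem hzc]
  have hseg : ∀ t ∈ Set.Icc (0:ℝ) 1, sdist Ω (z + t • (x - z)) = t * ‖x - z‖ := by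
    intro t ht
    have hlow : (t * ‖x - z‖) ≤ Metric.infDist (z + t • (x - z)) Ωᶜ := by
      have h1 := Metric.infDist_le_infDist_add_dist (s := Ωᶜ) (x := x) (y := z + t • (x - z))
      rw [← sdist_eq (subset_closure hx), hd, dist_eq_norm] at h1
      have : x - (z + t • (x - z)) = (1 - t) • (x - z) := by module
      rw [this, norm_smul, Real.norm_of_nonneg (by linarith [ht.2])] at h1
      linarith
    have hup : Metric.infDist (z + t • (x - z)) Ωᶜ ≤ t * ‖x - z‖ := by
      refine (Metric.infDist_le_dist_of_mem hzc).trans ?_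
      rw [dist_eq_norm, add_sub_cancel_left, norm_smul, Real.norm_of_nonneg ht.1]
    have hmem : z + t • (x - z) ∈ closure Ω := by
      rcases eq_or_lt_of_le ht.1 with h | h
      · simpa [← h] using hz.1
      · apply subset_closure
        by_contra hcon
        have : Metric.infDist (z + t • (x - z)) Ωᶜ = 0 := Metric.infDist_zero_of_mem hcon
        rw [this] at hlow
        rw [hd] at hp
        exact absurd (mul_pos h hp) (not_lt.2 hlow)
    rw [sdist_eq hmem]
    exact le_antisymm hup hlow
  have key : ∀ t ∈ Set.Icc (0:ℝ) 1, ⟪Dd (z + t • (x - z)), x - z⟫_ℝ = ‖x - z‖ := by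
    intro t ht
    have hlt : |sdist Ω (z + t • (x - z))| < δ₀ := by
      rw [hseg t ht, abs_of_nonneg (mul_nonneg ht.1 (norm_nonneg _))]
      rw [hd] at hxd
      nlinarith [ht.2, norm_nonneg (x - z)]
    have hg : HasFDerivAt (sdist Ω) ((innerSL ℝ) (Dd (z + t • (x - z)))) (z + t • (x - z)) :=
      (hDd _ hlt).hasFDerivAt
    have hl : HasDerivAt (fun t : ℝ => z + t • (x - z)) (x - z) t := by
      simpa using ((hasDerivAt_id t).smul_const (x - z)).const_add z
    have h1 := (hg.comp_hasDerivAt t hl).hasDerivWithinAt (s := Set.Icc (0:ℝ) 1)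
    have h2 : HasDerivWithinAt (fun t : ℝ => t * ‖x - z‖) (‖x - z‖) (Set.Icc (0:ℝ) 1) t := by
      simpa using ((hasDerivAt_id t).mul_const ‖x - z‖).hasDerivWithinAt
    have h3 := h2.congr (f₁ := sdist Ω ∘ fun t : ℝ => z + t • (x - z)) hseg (hseg t ht)
    have := UniqueDiffWithinAt.eq_deriv _ (uniqueDiffOn_Icc zero_lt_one t ht) h1 h3
    simpa using this
  have hgen : ∀ D : EuclideanSpace ℝ (Fin n), ‖D‖ = 1 → ⟪D, x - z⟫_ℝ = ‖x - z‖ →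
      ‖x - z‖ • D = x - z := by
    intro D h1 h2
    have := (inner_eq_norm_mul_iff_real (x := D) (y := x - z)).1 (by rw [h1, h2, one_mul])
    rwa [h1, one_smul] at this
  have hx' := hgen (Dd x) (hDdnorm x (by rwa [abs_of_pos hp]))
    (by simpa using key 1 (by simp))
  have hz' := hgen (Dd z) (hDdnorm z (by rwa [hz0, abs_zero]))
    (by simpa using key 0 (by simp))
  rw [hd] at hp
  exact smul_right_injective _ hp.ne' (hx'.trans hz'.symm)

theorem log_hess {n : ℕ} {d : EuclideanSpace ℝ (Fin n) → ℝ}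
    {Dd : EuclideanSpace ℝ (Fin n) → EuclideanSpace ℝ (Fin n)} {M : Matrix (Fin n) (Fin n) ℝ}
    {x : EuclideanSpace ℝ (Fin n)} (ε : ℝ) (hx : d x ≠ 0)
    (h1 : HasGradientAt d (Dd x) x)
    (h2 : HasFDerivAt Dd (LinearMap.toContinuousLinearMap (Matrix.toEuclideanLin M)) x) :
    HasFDerivAt (fun y => (ε * (d y)⁻¹) • Dd y)
      (LinearMap.toContinuousLinearMap (Matrix.toEuclideanLin
        ((ε * (d x)⁻¹) • M - (ε * ((d x) ^ 2)⁻¹) •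
          Matrix.vecMulVec (fun i => Dd x i) (fun i => Dd x i)))) x := by
  have hg : HasFDerivAt d ((innerSL ℝ) (Dd x)) x := h1.hasFDerivAt
  have hi := (((hasDerivAt_inv hx).comp_hasFDerivAt x hg).const_mul ε)
  have := hi.smul h2
  refine this.congr_fderiv ?_
  ext u i
  have e : (((Matrix.toEuclideanLin ((ε * (d x)⁻¹) • M - (ε * ((d x) ^ 2)⁻¹) •
          Matrix.vecMulVec (fun i => Dd x i) (fun i => Dd x i))) u) i : ℝ)
      = (ε * (d x)⁻¹) * (Matrix.toEuclideanLin M u) i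
        - (ε * ((d x) ^ 2)⁻¹) * (⟪Dd x, u⟫_ℝ * Dd x i) := by
    rw [inner_sum']
    simp only [Matrix.toLpLin_apply, Matrix.mulVec, dotProduct, Matrix.sub_apply,
      Matrix.smul_apply, Matrix.vecMulVec_apply, smul_eq_mul, Finset.sum_mul, Finset.mul_sum,
      ← Finset.sum_sub_distrib]
    refine Finset.sum_congr rfl fun j _ => ?_
    ring
  refine Eq.trans ?_ e.symm
  simp
  ring

theorem statement_1
    {n m r : ℕ} (Ω : Set (EuclideanSpace ℝ (Fin n)))
    (hΩo : IsOpen Ω) (hΩconn : IsConnected Ω) (hΩbdd : Bornology.IsBounded Ω)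
    (A : Set (Fin m → ℝ)) (hA : IsClosed A) (hAne : A.Nonempty)
    (b : EuclideanSpace ℝ (Fin n) → (Fin m → ℝ) → EuclideanSpace ℝ (Fin n))
    (σ : EuclideanSpace ℝ (Fin n) → (Fin m → ℝ) → Matrix (Fin n) (Fin r) ℝ)
    (hbBdd : ∃ C, ∀ x ∈ closure Ω, ∀ α ∈ A, ‖b x α‖ ≤ C)
    (hσBdd : ∃ C, ∀ x ∈ closure Ω, ∀ α ∈ A, mnorm (σ x α) ≤ C)
    (hbCont : ContinuousOn (fun q : EuclideanSpace ℝ (Fin n) × (Fin m → ℝ) => b q.1 q.2)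
      (closure Ω ×ˢ A))
    (hσCont : ContinuousOn (fun q : EuclideanSpace ℝ (Fin n) × (Fin m → ℝ) => σ q.1 q.2)
      (closure Ω ×ˢ A))
    (δ₀ : ℝ) (hδ₀ : 0 < δ₀)
    (Dd : EuclideanSpace ℝ (Fin n) → EuclideanSpace ℝ (Fin n))
    (D2d : EuclideanSpace ℝ (Fin n) → Matrix (Fin n) (Fin n) ℝ)
    (hDd : ∀ x, |sdist Ω x| < δ₀ → HasGradientAt (sdist Ω) (Dd x) x)
    (hDdnorm : ∀ x, |sdist Ω x| < δ₀ → ‖Dd x‖ = 1)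
    (hD2d : ∀ x, |sdist Ω x| < δ₀ →
      HasFDerivAt Dd (LinearMap.toContinuousLinearMap (Matrix.toEuclideanLin (D2d x))) x)
    (hD2dCont : ContinuousOn D2d {x | |sdist Ω x| < δ₀})
    (ω : ℝ → ℝ) (hω0 : ω 0 = 0) (hωcont : ContinuousAt ω 0) (hωnn : ∀ s, 0 ≤ ω s)
    (hreg22 : ∀ x ∈ closure Ω, ∀ y ∈ closure Ω, ∀ α ∈ A, ‖b x α - b y α‖ ≤ ω ‖x - y‖)
    (β B : ℝ) (hβlow : 1 / 2 < β) (hβhigh : β ≤ 1) (hB : 0 < B)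
    (hreg2 : ∀ x ∈ closure Ω, ∀ y ∈ closure Ω, ∀ α ∈ A,
      mnorm (σ x α - σ y α) ≤ B * ‖x - y‖ ^ β)
    (hinv : ∃ δ > (0 : ℝ), ∃ k > (0 : ℝ), ∃ γ : ℝ, γ < 2 * β - 1 ∧
      ∀ z ∈ frontier Ω, ∀ α ∈ A, sigmaT (σ z α) (Dd z) = 0 ∧
        ∀ x ∈ Ω, sdist Ω x < δ →
          k * sdist Ω x ^ γ ≤
            ⟪b x α, Dd x⟫_ℝ + Matrix.trace (σ x α * (σ x α)ᵀ * D2d x))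
    (hSMinP : ∀ w : EuclideanSpace ℝ (Fin n) → ℝ, LowerSemicontinuousOn w Ω →
      (∀ x ∈ Ω, ∀ qZ ∈ J2minus Ω w x, 0 ≤ Fop A b σ x qZ.1 qZ.2) →
      (∃ x₀ ∈ Ω, ∀ x ∈ Ω, w x₀ ≤ w x) → ∀ x ∈ Ω, ∀ y ∈ Ω, w x = w y)
    (v : EuclideanSpace ℝ (Fin n) → ℝ) (hv : LowerSemicontinuousOn v Ω)
    (hvsuper : ∀ x ∈ Ω, ∀ qZ ∈ J2minus Ω v x, 0 ≤ Fop A b σ x qZ.1 qZ.2)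
    (hgrowth : ∀ ε > (0 : ℝ), ∃ δ, 0 < δ ∧ δ < 1 ∧
      ∀ x ∈ Ω, sdist Ω x < δ → -(ε * (-Real.log (sdist Ω x))) ≤ v x) :
    ∀ x ∈ Ω, ∀ y ∈ Ω, v x = v y := by
  classical
  by_cases hc : Ωᶜ.Nonempty
  swap
  · rw [Set.not_nonempty_iff_eq_empty, Set.compl_empty_iff] at hc
    intro x _ y _
    rcases subsingleton_or_nontrivial (EuclideanSpace ℝ (Fin n)) with h | h
    · rw [Subsingleton.elim x y]
    · rw [hc] at hΩbdd
      exact absurd hΩbdd (NormedSpace.unbounded_univ ℝ _)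
  have hcont := sdist_cont Ω
  have hpos : ∀ x ∈ Ω, 0 < sdist Ω x := fun x hx => sdist_pos hΩo hc hx
  have hsub : ∀ s > (0 : ℝ), {x | s ≤ sdist Ω x} ⊆ Ω := fun s hs x hx =>
    mem_of_sdist_pos (lt_of_lt_of_le hs hx)
  have hcomp : ∀ s > (0 : ℝ), IsCompact {x | s ≤ sdist Ω x} := fun s hs =>
    Metric.isCompact_of_isClosed_isBounded (isClosed_le continuous_const hcont)
      (hΩbdd.subset (hsub s hs))
  obtain ⟨δ, hδ, k, hk, γ, hγ, hinv⟩ := hinv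
  -- a threshold below which the logarithmic barrier is strict
  obtain ⟨s, hs, hsδ, hsδ₀, hsk⟩ : ∃ s > (0:ℝ), s ≤ δ ∧ s ≤ δ₀ ∧
      ∀ t, 0 < t → t < s → B ^ 2 * t ^ (2 * β - 1) < k * t ^ γ := by
    have hlim : Tendsto (fun t : ℝ => B ^ 2 * t ^ (2 * β - 1 - γ)) (nhds 0) (nhds 0) := by
      have := (Real.continuousAt_rpow_const 0 (2 * β - 1 - γ) (Or.inr (by linarith))).tendsto
      rw [Real.zero_rpow (by linarith)] at this
      simpa using this.const_mul (B ^ 2)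
    obtain ⟨s, hs, hball⟩ := Metric.eventually_nhds_iff.1 (hlim.eventually (gt_mem_nhds hk))
    refine ⟨min s (min δ δ₀), by positivity, (min_le_right _ _).trans (min_le_left _ _),
      (min_le_right _ _).trans (min_le_right _ _), fun t ht hts => ?_⟩
    have h1 := hball (y := t) (by
      rw [Real.dist_eq, sub_zero, abs_of_pos ht]; exact hts.trans_le (min_le_left _ _))
    have h2 : t ^ (2 * β - 1) = t ^ (2 * β - 1 - γ) * t ^ γ := by
      rw [← Real.rpow_add ht]; congr 1; ring
    rw [h2, ← mul_assoc]
    exact mul_lt_mul_of_pos_right h1 (Real.rpow_pos_of_pos ht _)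
  -- no minimum of `v - ε log d` near the boundary
  have hno : ∀ ε > (0:ℝ), ∀ x ∈ Ω,
      (∀ y ∈ Ω, v x - ε * Real.log (sdist Ω x) ≤ v y - ε * Real.log (sdist Ω y)) →
      s ≤ sdist Ω x := by
    intro ε hε x hx hmin
    by_contra hlt
    push Not at hlt
    have hp := hpos x hx
    have hxδ₀ : sdist Ω x < δ₀ := hlt.trans_le hsδ₀
    have hev : ∀ᶠ y in nhds x, 0 < sdist Ω y ∧ sdist Ω y < δ₀ :=
      (hcont.continuousAt.eventually (lt_mem_nhds hp)).and
        (hcont.continuousAt.eventually (gt_mem_nhds hxδ₀))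
    have h1 : ∀ᶠ y in nhds x, HasGradientAt (fun y => ε * Real.log (sdist Ω y))
        ((ε * (sdist Ω y)⁻¹) • Dd y) y := by
      filter_upwards [hev] with y hy
      have hg : HasFDerivAt (sdist Ω) ((innerSL ℝ) (Dd y)) y :=
        (hDd y (by rw [abs_of_pos hy.1]; exact hy.2)).hasFDerivAt
      refine ((hg.log hy.1.ne').const_mul ε).congr_fderiv ?_
      ext u
      simp [inner_smul_left, mul_assoc]
    have hxa : |sdist Ω x| < δ₀ := by rwa [abs_of_pos hp]
    have h2 := log_hess (d := sdist Ω) ε hp.ne' (hDd x hxa) (hD2d x hxa)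
    set Z := (ε * (sdist Ω x)⁻¹) • D2d x - (ε * ((sdist Ω x) ^ 2)⁻¹) •
          Matrix.vecMulVec (fun i => Dd x i) (fun i => Dd x i) with hZ
    have hjet : ((ε * (sdist Ω x)⁻¹) • Dd x, Z) ∈ J2minus Ω v x := by
      refine ⟨(isSymm_of_hess h1 h2).neg, fun η hη => ?_⟩
      filter_upwards [(taylor2 h1 h2 hη).filter_mono nhdsWithin_le_nhds,
        self_mem_nhdsWithin] with y hy hyΩ
      have hm := hmin y hyΩ
      have hq : quadForm (-Z) (y - x) = - quadForm Z (y - x) := by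
        simp [quadForm]
      have := (abs_le.1 hy).1
      simp only [hq, inner_neg_left]
      linarith
    have hF := hvsuper x hx _ hjet
    obtain ⟨z, hz, hd⟩ := exists_proj hΩo hc hx
    have hge := grad_eq hΩo hc hδ₀ hDd hDdnorm hx hxδ₀ hz hd
    have hneg : Fop A b σ x ((ε * (sdist Ω x)⁻¹) • Dd x) Z ≤
        (ε * (sdist Ω x)⁻¹) * (B ^ 2 * sdist Ω x ^ (2 * β - 1) - k * sdist Ω x ^ γ) := by
      refine csSup_le (hAne.image _) ?_
      rintro _ ⟨α, hα, rfl⟩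
      obtain ⟨hz0, hi⟩ := hinv z hz α hα
      have hi := hi x hx (hlt.trans_le hsδ)
      have hsT : sigmaT (σ x α) (Dd x) = sigmaT (σ x α - σ z α) (Dd x) := by
        rw [← hge] at hz0
        have : sigmaT (σ x α - σ z α) (Dd x) = sigmaT (σ x α) (Dd x) - sigmaT (σ z α) (Dd x) := by
          simp [sigmaT, Matrix.sub_mulVec]
        rw [this, hz0, sub_zero]
      have hsq : ∑ j, (sigmaT (σ x α) (Dd x) j) ^ 2 ≤ B ^ 2 * sdist Ω x ^ (2 * β) := by
        rw [hsT]
        refine (sigmaT_sq_le _ _).trans ?_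
        rw [hDdnorm x hxa, one_pow, mul_one]
        have h := hreg2 x (subset_closure hx) z hz.1 α hα
        rw [← hd] at h
        have : B ^ 2 * sdist Ω x ^ (2 * β) = (B * sdist Ω x ^ β) ^ 2 := by
          rw [mul_pow, mul_comm 2 β, Real.rpow_mul hp.le]; norm_num
        rw [this]
        exact pow_le_pow_left₀ (Real.sqrt_nonneg _) h 2
      have htr : Matrix.trace (σ x α * (σ x α)ᵀ * Z) =
          (ε * (sdist Ω x)⁻¹) * Matrix.trace (σ x α * (σ x α)ᵀ * D2d x)
          - (ε * ((sdist Ω x) ^ 2)⁻¹) * ∑ j, (sigmaT (σ x α) (Dd x) j) ^ 2 := by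
        rw [hZ, Matrix.mul_sub, Matrix.mul_smul, Matrix.mul_smul, Matrix.trace_sub,
          Matrix.trace_smul, Matrix.trace_smul, trace_vec]
        simp
      have hpw : sdist Ω x ^ (2 * β) = sdist Ω x * sdist Ω x ^ (2 * β - 1) := by
        rw [Real.rpow_sub_one hp.ne']; field_simp
      have hc1 : 0 ≤ ε * (sdist Ω x)⁻¹ := by positivity
      have hc2 : 0 ≤ ε * ((sdist Ω x) ^ 2)⁻¹ := by positivity
      have e1 := mul_le_mul_of_nonneg_left hsq hc2
      have e2 := mul_le_mul_of_nonneg_left hi hc1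
      have e3 : ε * ((sdist Ω x) ^ 2)⁻¹ * (B ^ 2 * sdist Ω x ^ (2 * β))
          = (ε * (sdist Ω x)⁻¹) * (B ^ 2 * sdist Ω x ^ (2 * β - 1)) := by
        rw [hpw]; field_simp
      simp only [htr, inner_smul_right]
      rw [e3] at e1
      linarith
    have : (ε * (sdist Ω x)⁻¹) *
        (B ^ 2 * sdist Ω x ^ (2 * β - 1) - k * sdist Ω x ^ γ) < 0 :=
      mul_neg_of_pos_of_neg (by positivity) (sub_neg.2 (hsk _ hp hlt))
    linarith
  -- existence of a minimum
  have hex : ∀ ε > (0:ℝ), ∃ x ∈ Ω,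
      ∀ y ∈ Ω, v x - ε * Real.log (sdist Ω x) ≤ v y - ε * Real.log (sdist Ω y) := by
    intro ε hε
    obtain ⟨x₀, hx₀⟩ := hΩconn.nonempty
    obtain ⟨δ₁, hδ₁, hδ₁', hgr⟩ := hgrowth (ε / 2) (by positivity)
    set M := v x₀ - ε * Real.log (sdist Ω x₀) with hM
    let δ₂ := min δ₁ (min (sdist Ω x₀) (Real.exp (-(2 * M / ε))))
    have hδ₂ : 0 < δ₂ := lt_min hδ₁ (lt_min (hpos x₀ hx₀) (Real.exp_pos _))
    have hx₀K : x₀ ∈ {x | δ₂ ≤ sdist Ω x} :=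
      show δ₂ ≤ sdist Ω x₀ from (min_le_right _ _).trans (min_le_left _ _)
    have hlsc : LowerSemicontinuousOn (fun x => v x + -(ε * Real.log (sdist Ω x)))
        {x | δ₂ ≤ sdist Ω x} := by
      refine (hv.mono (hsub _ hδ₂)).add (ContinuousOn.lowerSemicontinuousOn ?_)
      refine ((hcont.continuousOn.log fun x hx => ?_).const_mul ε).neg
      exact (hδ₂.trans_le hx).ne'
    obtain ⟨x, hxK, hxmin⟩ := hlsc.exists_isMinOn ⟨x₀, hx₀K⟩ (hcomp _ hδ₂)
    refine ⟨x, hsub _ hδ₂ hxK, fun y hy => ?_⟩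
    by_cases hyK : δ₂ ≤ sdist Ω y
    · have := isMinOn_iff.1 hxmin y hyK
      linarith
    · push Not at hyK
      have h0 := isMinOn_iff.1 hxmin x₀ hx₀K
      have h1 := hgr y hy (hyK.trans_le (min_le_left _ _))
      have h2 : Real.log (sdist Ω y) ≤ -(2 * M / ε) := by
        rw [Real.log_le_iff_le_exp (hpos y hy)]
        exact hyK.le.trans ((min_le_right _ _).trans (min_le_right _ _))
      have h3 : ε / 2 * Real.log (sdist Ω y) ≤ ε / 2 * (-(2 * M / ε)) :=
        mul_le_mul_of_nonneg_left h2 (by positivity)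
      have h4 : ε / 2 * (-(2 * M / ε)) = -M := by field_simp
      linarith
  -- conclusion
  obtain ⟨x₁, hx₁, hm₁⟩ := hex 1 one_pos
  have hx₁K : x₁ ∈ {x | s ≤ sdist Ω x} := hno 1 one_pos x₁ hx₁ hm₁
  obtain ⟨xb, hxb, hxbmin⟩ :=
    (hv.mono (hsub s hs)).exists_isMinOn ⟨x₁, hx₁K⟩ (hcomp s hs)
  obtain ⟨C, hC⟩ := (hcomp s hs).exists_bound_of_continuousOn
    (f := fun x => Real.log (sdist Ω x))
    (hcont.continuousOn.log fun x hx => (hs.trans_le hx).ne')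
  refine hSMinP v hv hvsuper ⟨xb, hsub s hs hxb, fun x hx => ?_⟩
  have hle : ∀ ε > (0:ℝ), v xb ≤ v x + ε * (C - Real.log (sdist Ω x)) := by
    intro ε hε
    obtain ⟨y, hy, hmy⟩ := hex ε hε
    have hyK := hno ε hε y hy hmy
    have h1 := isMinOn_iff.1 hxbmin y hyK
    have h2 := hmy x hx
    have h3 := (le_abs_self _).trans (hC y hyK)
    have h4 := mul_le_mul_of_nonneg_left h3 hε.le
    linarith
  have hlim : Tendsto (fun ε : ℝ => v x + ε * (C - Real.log (sdist Ω x)))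
      (nhdsWithin 0 (Set.Ioi 0)) (nhds (v x)) := by
    have : Continuous (fun ε : ℝ => v x + ε * (C - Real.log (sdist Ω x))) := by fun_prop
    have h := this.tendsto 0
    simp only [zero_mul, add_zero] at h
    exact h.mono_left nhdsWithin_le_nhds
  exact ge_of_tendsto hlim (by filter_upwards [self_mem_nhdsWithin] with ε hε using hle ε hε)
end
end

section
/- Let Ω ⊂ ℝⁿ be a bounded connected open set (no boundary regularity assumed) and d(x) := dist(x, ∂Ω) for x ∈ Ω. Assume b and σ are Lipschitz continuous in x uniformly in α with constant B (i.e. (reg22) with ω(r) = Br and (reg2) with β = 1); assume that every x̄ ∈ ∂Ω has an open neighborhood U, a control ᾱ ∈ A and k > 0 satisfying (d_subsol) and (sigma_perp); and assume F satisfies the Strong Maximum Principle in Ω. If u : Ω → ℝ is upper semicontinuous, is a viscosity subsolution of F[u]=0 in Ω, and satisfies limsup_{x→∂Ω} u(x)/(−log d(x)) ≤ 0, then u is constant. -/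
open scoped InnerProductSpace Matrix
open Filter

noncomputable section

section prox
variable {E : Type*} [NormedAddCommGroup E] [InnerProductSpace ℝ E] [FiniteDimensional ℝ E]

lemma prox_exists (h : E → ℝ) (R : ℝ) (hR : 0 ≤ R)
    (hconv : ∀ x y : E, ∀ s : ℝ, 0 ≤ s → s ≤ 1 → h (x + s • (y - x)) ≤ (1 - s) * h x + s * h y)
    (hLip : ∀ x y : E, h x - h y ≤ R * ‖x - y‖) (τ : ℝ) (hτ : 0 < τ) :
    ∃ (y p : E → E) (g : E → ℝ), (∀ x, x - y x = τ • p x) ∧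
      (∀ x, g x = h (y x) + τ / 2 * ‖p x‖ ^ 2) ∧
      (∀ x y', g x ≤ h y' + ‖x - y'‖ ^ 2 / (2 * τ)) ∧
      (∀ x y', h (y x) + ⟪p x, y' - y x⟫_ℝ ≤ h y') := by
  have hcont : Continuous h := by
    have : LipschitzWith (Real.toNNReal R) h := by
      apply LipschitzWith.of_le_add_mul
      intro x y
      rw [Real.coe_toNNReal R hR, dist_eq_norm]
      linarith [hLip x y]
    exact this.continuous
  have hmin : ∀ x : E, ∃ y : E, ∀ y', h y + ‖x - y‖ ^ 2 / (2 * τ) ≤ h y' + ‖x - y'‖ ^ 2 / (2 * τ) := by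
    intro x
    obtain ⟨y, hy, hmin⟩ := (isCompact_closedBall x (2 * τ * R)).exists_isMinOn
      (f := fun y => h y + ‖x - y‖ ^ 2 / (2 * τ))
      ⟨x, Metric.mem_closedBall_self (by positivity)⟩ (by fun_prop)
    refine ⟨y, fun y' => ?_⟩
    by_cases hy' : y' ∈ Metric.closedBall x (2 * τ * R)
    · exact hmin hy'
    · have h1 := hmin (Metric.mem_closedBall_self (by positivity) : x ∈ Metric.closedBall x (2 * τ * R))
      simp only [Set.mem_ofPred_eq, sub_self, norm_zero] at h1
      have h2 := hLip x y'
      rw [Metric.mem_closedBall, dist_eq_norm, not_le, ← norm_neg, neg_sub] at hy'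
      have h3 : R * ‖x - y'‖ ≤ ‖x - y'‖ ^ 2 / (2 * τ) := by
        rw [le_div_iff₀ (by positivity)]
        nlinarith [norm_nonneg (x - y')]
      have h4 : h x + 0 ^ 2 / (2 * τ) = h x := by simp
      linarith
  choose y hy using hmin
  have hxy : ∀ x, x - y x = τ • (τ⁻¹ • (x - y x)) := fun x => by
    rw [smul_smul, mul_inv_cancel₀ hτ.ne', one_smul]
  refine ⟨y, fun x => τ⁻¹ • (x - y x), fun x => h (y x) + τ / 2 * ‖τ⁻¹ • (x - y x)‖ ^ 2, hxy,
    fun x => rfl, ?_, ?_⟩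
  · intro x y'
    have := hy x y'
    have e : τ / 2 * ‖τ⁻¹ • (x - y x)‖ ^ 2 = ‖x - y x‖ ^ 2 / (2 * τ) := by
      rw [norm_smul, Real.norm_of_nonneg (by positivity)]
      field_simp
    simp only [e]
    exact this
  · intro x y'
    have key : ∀ s : ℝ, 0 < s → s ≤ 1 → h (y x) + ⟪τ⁻¹ • (x - y x), y' - y x⟫_ℝ - h y' ≤
        s * (‖y' - y x‖ ^ 2 / (2 * τ)) := by
      intro s hs hs1
      have h1 := hy x (y x + s • (y' - y x))
      have h2 := hconv (y x) y' s hs.le hs1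
      have e : ‖x - (y x + s • (y' - y x))‖ ^ 2 = ‖x - y x‖ ^ 2
          - 2 * (s * ⟪x - y x, y' - y x⟫_ℝ) + s ^ 2 * ‖y' - y x‖ ^ 2 := by
        rw [← sub_sub, norm_sub_sq_real, inner_smul_right, norm_smul, mul_pow, Real.norm_eq_abs, sq_abs]
      rw [e] at h1
      rw [real_inner_smul_left]
      have h3 : s * (h (y x) + τ⁻¹ * ⟪x - y x, y' - y x⟫_ℝ - h y') ≤
        s * (s * (‖y' - y x‖ ^ 2 / (2 * τ))) := by
        have e2 : (‖x - y x‖ ^ 2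
          - 2 * (s * ⟪x - y x, y' - y x⟫_ℝ) + s ^ 2 * ‖y' - y x‖ ^ 2) / (2 * τ) =
          ‖x - y x‖ ^ 2 / (2 * τ) - s * (τ⁻¹ * ⟪x - y x, y' - y x⟫_ℝ)
            + s * (s * (‖y' - y x‖ ^ 2 / (2 * τ))) := by field_simp
        rw [e2] at h1
        linarith
      exact le_of_mul_le_mul_left h3 hs
    have hlim : Tendsto (fun s : ℝ => s * (‖y' - y x‖ ^ 2 / (2 * τ))) (nhdsWithin 0 (Set.Ioi 0))
        (nhds (0 * (‖y' - y x‖ ^ 2 / (2 * τ)))) :=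
      ((continuous_id.mul continuous_const).tendsto 0).mono_left nhdsWithin_le_nhds
    rw [zero_mul] at hlim
    have := ge_of_tendsto hlim (b := h (y x) + ⟪τ⁻¹ • (x - y x), y' - y x⟫_ℝ - h y') (by
      filter_upwards [Ioc_mem_nhdsGT (zero_lt_one' ℝ)] with s hs using key s hs.1 hs.2)
    simp only at *
    linarith

/-- properties of the Moreau envelope -/
lemma prox_props (h : E → ℝ) (R : ℝ) (hR : 0 ≤ R)
    (hconv : ∀ x y : E, ∀ s : ℝ, 0 ≤ s → s ≤ 1 → h (x + s • (y - x)) ≤ (1 - s) * h x + s * h y)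
    (hLip : ∀ x y : E, h x - h y ≤ R * ‖x - y‖) (τ : ℝ) (hτ : 0 < τ) :
    ∃ (y p : E → E) (g : E → ℝ), (∀ x, x - y x = τ • p x) ∧
      (∀ x, ‖p x‖ ≤ R) ∧
      (∀ x y', h (y x) + ⟪p x, y' - y x⟫_ℝ ≤ h y') ∧
      (∀ x v, 0 ≤ g (x + v) - g x - ⟪p x, v⟫_ℝ) ∧
      (∀ x v, g (x + v) - g x - ⟪p x, v⟫_ℝ ≤ ‖v‖ ^ 2 / (2 * τ)) ∧
      (∀ x x', ‖p x - p x'‖ ≤ τ⁻¹ * ‖x - x'‖) ∧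
      (∀ x, g x ≤ h x) ∧ (∀ x, h x ≤ g x + τ * R ^ 2) ∧
      (∀ x v, g (x + v) - g x ≤ h (y x + v) - h (y x)) := by
  obtain ⟨y, p, g, hxy, hg, hgle, hsub⟩ := prox_exists h R hR hconv hLip τ hτ
  have hpR : ∀ x, ‖p x‖ ≤ R := by
    intro x
    have h1 := hsub x (y x + p x)
    have h2 := hLip (y x + p x) (y x)
    simp only [add_sub_cancel_left, real_inner_self_eq_norm_sq] at h1 h2
    by_contra hc
    push Not at hc
    nlinarith
  have hlow : ∀ x x', g x + ⟪p x, x' - x⟫_ℝ + τ / 2 * ‖p x' - p x‖ ^ 2 ≤ g x' := by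
    intro x x'
    have h1 := hsub x (y x')
    have e1 : y x' - y x = (x' - x) - τ • (p x' - p x) := by
      rw [smul_sub, ← hxy, ← hxy]; abel
    rw [e1, inner_sub_right (p x) (x' - x), inner_smul_right, inner_sub_right (p x) (p x'),
      real_inner_self_eq_norm_sq] at h1
    rw [hg, hg, norm_sub_sq_real, real_inner_comm (p x) (p x')]
    linarith
  have hquad : ∀ x v, ‖x + v - (y x + v)‖ ^ 2 / (2 * τ) = τ / 2 * ‖p x‖ ^ 2 := by
    intro x v
    rw [add_sub_add_right_eq_sub, hxy, norm_smul, Real.norm_of_nonneg hτ.le]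
    field_simp
  refine ⟨y, p, g, hxy, hpR, hsub, ?_, ?_, ?_, ?_, ?_, ?_⟩
  · intro x v
    have := hlow x (x + v)
    rw [add_sub_cancel_left] at this
    have : 0 ≤ τ / 2 * ‖p (x + v) - p x‖ ^ 2 := by positivity
    linarith
  · intro x v
    have h1 := hgle (x + v) (y x)
    have e : ‖x + v - y x‖ ^ 2 / (2 * τ) = τ / 2 * ‖p x‖ ^ 2 + ⟪p x, v⟫_ℝ + ‖v‖ ^ 2 / (2 * τ) := by
      rw [add_sub_right_comm, hxy, norm_add_sq_real, norm_smul, Real.norm_of_nonneg hτ.le,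
        real_inner_smul_left]
      field_simp
    rw [e] at h1
    rw [hg x]
    linarith
  · intro x x'
    have h1 := hlow x x'
    have h2 := hlow x' x
    rw [norm_sub_rev] at h1
    have h3 : τ * ‖p x - p x'‖ ^ 2 ≤ ⟪p x - p x', x - x'⟫_ℝ := by
      have : ⟪p x - p x', x - x'⟫_ℝ = - ⟪p x, x' - x⟫_ℝ - ⟪p x', x - x'⟫_ℝ := by
        rw [inner_sub_left, ← neg_sub x x', inner_neg_right]; ring
      linarith
    have h4 := real_inner_le_norm (p x - p x') (x - x')
    rw [inv_mul_eq_div, le_div_iff₀ hτ]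
    by_contra hc
    push Not at hc
    have h5 : 0 < ‖p x - p x'‖ := by
      by_contra h0
      have : ‖p x - p x'‖ = 0 := le_antisymm (not_lt.mp h0) (norm_nonneg _)
      rw [this] at hc
      linarith [norm_nonneg (x - x')]
    nlinarith
  · intro x
    have := hgle x x
    simpa using this
  · intro x
    have h1 := hLip x (y x)
    rw [hxy, norm_smul, Real.norm_of_nonneg hτ.le] at h1
    rw [hg]
    have : R * (τ * ‖p x‖) ≤ R * (τ * R) := by gcongr; exact hpR x
    have : 0 ≤ τ / 2 * ‖p x‖ ^ 2 := by positivity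
    nlinarith
  · intro x v
    have h1 := hgle (x + v) (y x + v)
    rw [hquad] at h1
    rw [hg x]
    linarith

end prox

section peano
variable {E : Type*} [NormedAddCommGroup E] [InnerProductSpace ℝ E]

/-- second order expansion at a point where the gradient is differentiable -/
lemma peano_of_grad (g : E → ℝ) (p : E → E) (L : ℝ)
    (hlo : ∀ x v, 0 ≤ g (x + v) - g x - ⟪p x, v⟫_ℝ)
    (hhi : ∀ x v, g (x + v) - g x - ⟪p x, v⟫_ℝ ≤ L * ‖v‖ ^ 2)
    (x : E) (T : E →L[ℝ] E) (hT : HasFDerivAt p T x) (ε : ℝ) (hε : 0 < ε) :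
    ∀ᶠ v in nhds (0 : E),
      |g (x + v) - g x - ⟪p x, v⟫_ℝ - (1 / 2) * ⟪T v, v⟫_ℝ| ≤ ε * ‖v‖ ^ 2 := by
  have hline : ∀ v : E, ∀ s : ℝ, HasDerivAt (fun s : ℝ => g (x + s • v)) ⟪p (x + s • v), v⟫_ℝ s := by
    intro v s
    rw [hasDerivAt_iff_isLittleO_nhds_zero]
    have hO : (fun t : ℝ => g (x + (s + t) • v) - g (x + s • v) - t • ⟪p (x + s • v), v⟫_ℝ) =O[nhds 0]
        (fun t : ℝ => t ^ 2) := by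
      apply Asymptotics.IsBigO.of_bound (L * ‖v‖ ^ 2)
      filter_upwards with t
      have h1 := hlo (x + s • v) (t • v)
      have h2 := hhi (x + s • v) (t • v)
      rw [add_assoc, ← add_smul, inner_smul_right] at h1 h2
      rw [smul_eq_mul, Real.norm_of_nonneg h1, Real.norm_of_nonneg (sq_nonneg t)]
      rw [norm_smul, mul_pow, Real.norm_eq_abs, sq_abs] at h2
      linarith
    refine hO.trans_isLittleO ?_
    simpa using (Asymptotics.isLittleO_pow_id (𝕜 := ℝ) (n := 2) (by norm_num))
  have hlo' := (hasFDerivAt_iff_isLittleO_nhds_zero.mp hT).def hε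
  rw [Metric.eventually_nhds_iff_ball] at hlo' ⊢
  obtain ⟨δ, hδ, hb⟩ := hlo'
  refine ⟨δ, hδ, fun v hv => ?_⟩
  have hv' : ‖v‖ < δ := by simpa using hv
  set φ : ℝ → ℝ := fun s => g (x + s • v) - s * ⟪p x, v⟫_ℝ - s ^ 2 * ((1 / 2) * ⟪T v, v⟫_ℝ) with hφ
  have hφd : ∀ s : ℝ, HasDerivAt φ (⟪p (x + s • v) - p x - T (s • v), v⟫_ℝ) s := by
    intro s
    have h1 := ((hline v s).sub ((hasDerivAt_id s).mul_const ⟪p x, v⟫_ℝ)).sub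
      ((hasDerivAt_pow 2 s).mul_const ((1 / 2) * ⟪T v, v⟫_ℝ))
    refine HasDerivAt.congr_deriv (f := φ) h1 ?_
    rw [inner_sub_left, inner_sub_left, map_smul, real_inner_smul_left]
    simp
    ring
  have hbd : ∀ s ∈ Set.Ico (0:ℝ) 1, ‖⟪p (x + s • v) - p x - T (s • v), v⟫_ℝ‖ ≤ ε * ‖v‖ ^ 2 := by
    intro s hs
    have hsv : ‖s • v‖ ≤ ‖v‖ := by
      rw [norm_smul, Real.norm_of_nonneg hs.1]
      nlinarith [norm_nonneg v, hs.2]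
    have h1 := hb (s • v) (by simpa using lt_of_le_of_lt hsv hv')
    calc _ ≤ ‖p (x + s • v) - p x - T (s • v)‖ * ‖v‖ := norm_inner_le_norm _ _
      _ ≤ (ε * ‖v‖) * ‖v‖ := by
        gcongr
        exact h1.trans (by gcongr)
      _ = _ := by ring
  have := norm_image_sub_le_of_norm_deriv_le_segment_01' (f := φ)
    (fun s _ => (hφd s).hasDerivWithinAt) hbd
  rw [Real.norm_eq_abs] at this
  convert this using 2
  simp [hφ]
  ring

end peano

section mat
variable {n : ℕ}

/-- symmetrised matrix of an operator -/
def symMat (T : EuclideanSpace ℝ (Fin n) →L[ℝ] EuclideanSpace ℝ (Fin n)) :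
    Matrix (Fin n) (Fin n) ℝ :=
  fun i j => ((T (EuclideanSpace.single j 1)) i + (T (EuclideanSpace.single i 1)) j) / 2

lemma symMat_symm (T : EuclideanSpace ℝ (Fin n) →L[ℝ] EuclideanSpace ℝ (Fin n)) :
    (symMat T).IsSymm := by
  ext i j
  simp [symMat, add_comm]

lemma quadForm_symMat (T : EuclideanSpace ℝ (Fin n) →L[ℝ] EuclideanSpace ℝ (Fin n))
    (v : EuclideanSpace ℝ (Fin n)) : quadForm (symMat T) v = ⟪T v, v⟫_ℝ := by
  have hv : v = ∑ j, v j • EuclideanSpace.single j (1:ℝ) := by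
    ext i
    simp [Finset.sum_apply, Pi.single_apply]
  have hTv : ∀ i, (T v) i = ∑ j, v j * (T (EuclideanSpace.single j 1)) i := by
    intro i
    conv_lhs => rw [hv]
    simp
  have e1 : ⟪T v, v⟫_ℝ = ∑ i, ∑ j, (T (EuclideanSpace.single j 1)) i * v i * v j := by
    rw [PiLp.inner_apply]
    refine Finset.sum_congr rfl fun i _ => ?_
    simp only [RCLike.inner_apply, conj_trivial]
    rw [hTv, Finset.mul_sum]
    exact Finset.sum_congr rfl fun j _ => by ring
  have e2 : ⟪T v, v⟫_ℝ = ∑ i, ∑ j, (T (EuclideanSpace.single i 1)) j * v i * v j := by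
    rw [e1, Finset.sum_comm]
    exact Finset.sum_congr rfl fun i _ => Finset.sum_congr rfl fun j _ => by ring
  have e3 : quadForm (symMat T) v = (⟪T v, v⟫_ℝ + ⟪T v, v⟫_ℝ) / 2 := by
    conv_rhs => rw [e1]
    nth_rewrite 2 [← e1]
    rw [e2, ← Finset.sum_add_distrib, Finset.sum_div]
    refine Finset.sum_congr rfl fun i _ => ?_
    rw [← Finset.sum_add_distrib, Finset.sum_div]
    refine Finset.sum_congr rfl fun j _ => ?_
    simp only [symMat]
    ring
  rw [e3]; ring

end mat

section avg
open MeasureTheory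
variable {n : ℕ}

lemma exists_mollifier (τ : ℝ) (hτ : 0 < τ) :
    ∃ μ : Measure (EuclideanSpace ℝ (Fin n)), IsProbabilityMeasure μ ∧ μ ≪ volume ∧
      ∀ᵐ t ∂μ, ‖t‖ ≤ τ := by
  have h0 : (volume (Metric.closedBall (0 : EuclideanSpace ℝ (Fin n)) τ)) ≠ 0 :=
    (Metric.measure_closedBall_pos volume 0 hτ).ne'
  have h1 : (volume (Metric.closedBall (0 : EuclideanSpace ℝ (Fin n)) τ)) ≠ ⊤ :=
    measure_closedBall_lt_top.ne
  refine ⟨ProbabilityTheory.cond volume (Metric.closedBall 0 τ),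
    ProbabilityTheory.cond_isProbabilityMeasure_of_finite h0 h1,
    ProbabilityTheory.cond_absolutelyContinuous, ?_⟩
  have := ProbabilityTheory.ae_cond_mem (μ := (volume : Measure (EuclideanSpace ℝ (Fin n))))
    (s := Metric.closedBall 0 τ) measurableSet_closedBall
  filter_upwards [this] with t ht
  simpa using ht

lemma quadForm_bound (T : EuclideanSpace ℝ (Fin n) →L[ℝ] EuclideanSpace ℝ (Fin n))
    (L : ℝ) (hT : ‖T‖ ≤ L) (v : EuclideanSpace ℝ (Fin n)) :
    |⟪T v, v⟫_ℝ| ≤ L * ‖v‖ ^ 2 := by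
  calc _ ≤ ‖T v‖ * ‖v‖ := abs_real_inner_le_norm _ _
    _ ≤ (‖T‖ * ‖v‖) * ‖v‖ := by gcongr; exact T.le_opNorm v
    _ ≤ (L * ‖v‖) * ‖v‖ := by gcongr
    _ = _ := by ring

lemma symMat_measurable (p : EuclideanSpace ℝ (Fin n) → EuclideanSpace ℝ (Fin n))
    (x : EuclideanSpace ℝ (Fin n)) (i j : Fin n) :
    Measurable (fun t => symMat (fderiv ℝ p (x + t)) i j) := by
  have hm : Measurable (fun t => fderiv ℝ p (x + t)) :=
    (measurable_fderiv ℝ p).comp (measurable_const_add x)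
  have hc : ∀ k l : Fin n, Measurable (fun t => (fderiv ℝ p (x + t) (EuclideanSpace.single k 1)) l) := by
    intro k l
    have : Continuous (fun T : EuclideanSpace ℝ (Fin n) →L[ℝ] EuclideanSpace ℝ (Fin n) =>
      (T (EuclideanSpace.single k 1)) l) := by fun_prop
    exact this.measurable.comp hm
  unfold symMat
  exact ((hc j i).add (hc i j)).div_const 2

lemma symMat_bound (T : EuclideanSpace ℝ (Fin n) →L[ℝ] EuclideanSpace ℝ (Fin n))
    (L : ℝ) (hT : ‖T‖ ≤ L) (i j : Fin n) : ‖symMat T i j‖ ≤ L := by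
  have : ∀ k l : Fin n, |(T (EuclideanSpace.single k 1)) l| ≤ L := by
    intro k l
    rw [← Real.norm_eq_abs]
    refine (PiLp.norm_apply_le _ l).trans ((T.le_opNorm _).trans ?_)
    simpa using hT
  have h1 := abs_le.mp (this j i)
  have h2 := abs_le.mp (this i j)
  rw [Real.norm_eq_abs, abs_le]
  unfold symMat
  constructor <;> linarith

lemma avg_lemma (g : EuclideanSpace ℝ (Fin n) → ℝ)
    (p : EuclideanSpace ℝ (Fin n) → EuclideanSpace ℝ (Fin n)) (R τ : ℝ) (hR : 0 ≤ R) (hτ : 0 < τ)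
    (hp : ∀ x, ‖p x‖ ≤ R)
    (hlo : ∀ x v, 0 ≤ g (x + v) - g x - ⟪p x, v⟫_ℝ)
    (hhi : ∀ x v, g (x + v) - g x - ⟪p x, v⟫_ℝ ≤ ‖v‖ ^ 2 / (2 * τ))
    (hpl : ∀ x x', ‖p x - p x'‖ ≤ τ⁻¹ * ‖x - x'‖) :
    ∃ H : EuclideanSpace ℝ (Fin n) → ℝ, (∀ x, |H x - g x| ≤ R * τ) ∧ Continuous H ∧
      ∀ x0, ∃ (P : EuclideanSpace ℝ (Fin n)) (X : Matrix (Fin n) (Fin n) ℝ), X.IsSymm ∧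
        (∀ ε > (0:ℝ), ∀ᶠ v in nhds (0 : EuclideanSpace ℝ (Fin n)),
          |H (x0 + v) - H x0 - ⟪P, v⟫_ℝ - (1 / 2) * quadForm X v| ≤ ε * ‖v‖ ^ 2) ∧
        ∀ (r : ℕ) (a : EuclideanSpace ℝ (Fin n)) (s : Fin r → EuclideanSpace ℝ (Fin n)) (c κ : ℝ),
          (∀ x (T : EuclideanSpace ℝ (Fin n) →L[ℝ] EuclideanSpace ℝ (Fin n)), ‖x - x0‖ ≤ τ → HasFDerivAt p T x → ‖T‖ ≤ τ⁻¹ →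
            c ≤ ⟪a, p x⟫_ℝ + κ * ∑ j, ⟪T (s j), s j⟫_ℝ) →
          c ≤ ⟪a, P⟫_ℝ + κ * ∑ j, quadForm X (s j) := by
  obtain ⟨μ, hμp, hμv, hμt⟩ := exists_mollifier (n := n) τ hτ
  have hgl : ∀ x v, |g (x + v) - g x| ≤ R * ‖v‖ := by
    intro x v
    have h1 := hlo x v
    have h2 := hlo (x + v) (-v)
    have h3 := abs_le.mp ((abs_real_inner_le_norm (p x) v).trans
      (mul_le_mul_of_nonneg_right (hp x) (norm_nonneg v)))
    have h4 := abs_le.mp ((abs_real_inner_le_norm (p (x+v)) v).trans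
      (mul_le_mul_of_nonneg_right (hp (x+v)) (norm_nonneg v)))
    rw [add_neg_cancel_right, inner_neg_right] at h2
    rw [abs_le]; constructor <;> linarith
  have hgL : LipschitzWith (Real.toNNReal R) g := by
    apply LipschitzWith.of_dist_le_mul
    intro x y
    rw [Real.coe_toNNReal R hR, Real.dist_eq, dist_eq_norm]
    simpa using hgl y (x - y)
  have hgc : Continuous g := hgL.continuous
  have hpL : LipschitzWith (Real.toNNReal τ⁻¹) p := by
    apply LipschitzWith.of_dist_le_mul
    intro x y
    rw [Real.coe_toNNReal _ (by positivity), dist_eq_norm, dist_eq_norm]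
    exact hpl x y
  have hTn : ∀ x, ‖fderiv ℝ p x‖ ≤ τ⁻¹ := by
    intro x
    have := norm_fderiv_le_of_lipschitz ℝ hpL (x₀ := x)
    rwa [Real.coe_toNNReal _ (by positivity)] at this
  have hdiff : ∀ x0, ∀ᵐ t ∂μ, DifferentiableAt ℝ p (x0 + t) := by
    intro x0
    have h1 : ∀ᵐ t ∂(volume : Measure (EuclideanSpace ℝ (Fin n))), DifferentiableAt ℝ p (x0 + t) :=
      (quasiMeasurePreserving_add_left volume x0).ae hpL.ae_differentiableAt
    exact hμv.ae_le h1
  have gint : ∀ x, Integrable (fun t => g (x + t)) μ := by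
    intro x
    refine Integrable.of_bound (C := |g x| + R * τ) (by fun_prop) ?_
    filter_upwards [hμt] with t ht
    have h1 := abs_le.mp (hgl x t)
    have h2 : R * ‖t‖ ≤ R * τ := by gcongr
    rw [Real.norm_eq_abs]
    calc |g (x+t)| = |g x + (g (x + t) - g x)| := by ring_nf
      _ ≤ |g x| + |g (x + t) - g x| := abs_add_le _ _
      _ ≤ _ := by linarith [hgl x t]
  have pint : ∀ x, Integrable (fun t => p (x + t)) μ := by
    intro x
    refine Integrable.of_bound (C := R)
      ((hpL.continuous.comp (continuous_const_add x)).aestronglyMeasurable) ?_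
    filter_upwards with t using hp _
  have Xint : ∀ x i j, Integrable (fun t => symMat (fderiv ℝ p (x + t)) i j) μ := by
    intro x i j
    refine Integrable.of_bound (C := τ⁻¹) (symMat_measurable p x i j).aestronglyMeasurable ?_
    filter_upwards with t using symMat_bound _ _ (hTn _) i j
  set X : EuclideanSpace ℝ (Fin n) → Matrix (Fin n) (Fin n) ℝ :=
    fun x i j => ∫ t, symMat (fderiv ℝ p (x + t)) i j ∂μ with hX
  have qint : ∀ x v, Integrable (fun t => ⟪fderiv ℝ p (x + t) v, v⟫_ℝ) μ := by
    intro x v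
    simp only [← quadForm_symMat, quadForm]
    exact integrable_finsetSum _ fun i _ => integrable_finsetSum _ fun j _ =>
      ((Xint x i j).mul_const _).mul_const _
  have qeq : ∀ x v, quadForm (X x) v = ∫ t, ⟪fderiv ℝ p (x + t) v, v⟫_ℝ ∂μ := by
    intro x v
    simp only [← quadForm_symMat, quadForm]
    rw [integral_finsetSum _ fun i _ => integrable_finsetSum _ fun j _ =>
      ((Xint x i j).mul_const _).mul_const _]
    refine Finset.sum_congr rfl fun i _ => ?_
    rw [integral_finsetSum _ fun j _ => ((Xint x i j).mul_const _).mul_const _]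
    refine Finset.sum_congr rfl fun j _ => ?_
    rw [integral_mul_const, integral_mul_const]
  have peq : ∀ x v, ⟪∫ t, p (x + t) ∂μ, v⟫_ℝ = ∫ t, ⟪p (x + t), v⟫_ℝ ∂μ := by
    intro x v
    rw [real_inner_comm, ← integral_inner (pint x) v]
    simp only [real_inner_comm]
  have pvint : ∀ x v, Integrable (fun t => ⟪p (x + t), v⟫_ℝ) μ := by
    intro x v
    exact (pint x).inner_const v
  have Hlip : ∀ x y, |(∫ t, g (x + t) ∂μ) - ∫ t, g (y + t) ∂μ| ≤ R * ‖x - y‖ := by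
    intro x y
    rw [← integral_sub (gint x) (gint y), ← Real.norm_eq_abs]
    have := norm_integral_le_of_norm_le_const (μ := μ) (f := fun t => g (x + t) - g (y + t))
      (C := R * ‖x - y‖) (by
        filter_upwards with t
        rw [Real.norm_eq_abs]
        have := hgl (y + t) (x - y)
        convert this using 4
        abel)
    simpa using this
  refine ⟨fun x => ∫ t, g (x + t) ∂μ, ?_, ?_, ?_⟩
  · intro x
    have e : (∫ t, g (x + t) ∂μ) - g x = ∫ t, (g (x + t) - g x) ∂μ := by
      rw [integral_sub (gint x) (integrable_const _)]; simp
    rw [e, ← Real.norm_eq_abs]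
    have := norm_integral_le_of_norm_le_const (μ := μ) (f := fun t => g (x + t) - g x)
      (C := R * τ) (by
        filter_upwards [hμt] with t ht
        rw [Real.norm_eq_abs]
        exact (hgl x t).trans (by gcongr))
    simpa using this
  · have : LipschitzWith (Real.toNNReal R) (fun x => ∫ t, g (x + t) ∂μ) := by
      apply LipschitzWith.of_dist_le_mul
      intro x y
      rw [Real.coe_toNNReal R hR, Real.dist_eq, dist_eq_norm]
      exact Hlip x y
    exact this.continuous
  intro x0
  refine ⟨∫ t, p (x0 + t) ∂μ, X x0, ?_, ?_, ?_⟩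
  · ext i j
    change ∫ t, symMat (fderiv ℝ p (x0 + t)) j i ∂μ = ∫ t, symMat (fderiv ℝ p (x0 + t)) i j ∂μ
    refine integral_congr_ae (Eventually.of_forall fun t => ?_)
    exact (symMat_symm (fderiv ℝ p (x0 + t))).apply i j
  · intro ε hε
    set D : EuclideanSpace ℝ (Fin n) → EuclideanSpace ℝ (Fin n) → ℝ := fun v t =>
      g (x0 + v + t) - g (x0 + t) - ⟪p (x0 + t), v⟫_ℝ
        - (1 / 2) * ⟪fderiv ℝ p (x0 + t) v, v⟫_ℝ with hD
    have hDi : ∀ v, Integrable (D v) μ := fun v =>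
      (((gint (x0 + v)).sub (gint x0)).sub (pvint x0 v)).sub ((qint x0 v).const_mul _)
    have hDe : ∀ v, ∫ t, D v t ∂μ = (∫ t, g (x0 + v + t) ∂μ) - (∫ t, g (x0 + t) ∂μ) -
        ⟪∫ t, p (x0 + t) ∂μ, v⟫_ℝ - (1 / 2) * quadForm (X x0) v := by
      intro v
      have i1 : Integrable (fun t => g (x0 + v + t) - g (x0 + t)) μ := (gint _).sub (gint _)
      have i2 : Integrable (fun t => g (x0 + v + t) - g (x0 + t) - ⟪p (x0 + t), v⟫_ℝ) μ :=
        i1.sub (pvint _ _)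
      rw [peq, qeq, ← integral_const_mul, ← integral_sub (gint _) (gint _), ← integral_sub
        i1 (pvint _ _), ← integral_sub i2 ((qint _ _).const_mul _)]
    have hlim : Tendsto (fun v => ∫ t, D v t / ‖v‖ ^ 2 ∂μ) (nhds 0) (nhds (∫ t, (0:ℝ) ∂μ)) := by
      refine tendsto_integral_filter_of_dominated_convergence (fun _ => τ⁻¹) ?_ ?_
        (integrable_const _) ?_
      · exact Eventually.of_forall fun v => ((hDi v).div_const _).aestronglyMeasurable
      · refine Eventually.of_forall fun v => Eventually.of_forall fun t => ?_
        have h1 := hlo (x0 + t) v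
        have h2 := hhi (x0 + t) v
        have h3 := abs_le.mp (quadForm_bound _ _ (hTn (x0 + t)) v)
        rw [add_right_comm] at h1 h2
        have e : ‖v‖ ^ 2 / (2 * τ) = (1/2) * (τ⁻¹ * ‖v‖ ^ 2) := by field_simp
        rw [e] at h2
        have h5 : 0 ≤ τ⁻¹ * ‖v‖ ^ 2 := by positivity
        rw [Real.norm_eq_abs, abs_div, abs_of_nonneg (sq_nonneg ‖v‖)]
        refine div_le_of_le_mul₀ (by positivity) (by positivity) ?_
        rw [abs_le]
        simp only [hD]
        constructor <;> linarith
      · filter_upwards [hdiff x0] with t ht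
        rw [Metric.tendsto_nhds]
        intro η hη
        have := peano_of_grad g p (1 / (2 * τ)) hlo
          (fun x v => (hhi x v).trans (by rw [div_mul_eq_mul_div, one_mul])) (x0 + t) _ ht.hasFDerivAt (η / 2)
          (by positivity)
        filter_upwards [this] with v hv
        rw [Real.dist_eq, sub_zero, abs_div, abs_of_nonneg (sq_nonneg ‖v‖)]
        refine lt_of_le_of_lt (div_le_of_le_mul₀ (by positivity) (by positivity) ?_) (half_lt_self hη)
        simp only [hD]
        rw [add_right_comm x0 v t]
        exact hv
    rw [integral_zero, Metric.tendsto_nhds] at hlim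
    filter_upwards [hlim ε hε] with v hv
    rw [← hDe]
    rw [integral_div, Real.dist_eq, sub_zero, abs_div, abs_of_nonneg (sq_nonneg ‖v‖)] at hv
    rcases eq_or_ne v 0 with rfl | hv0
    · simp [hD]
    · have : 0 < ‖v‖ ^ 2 := by positivity
      rw [div_lt_iff₀ this] at hv
      exact hv.le
  · intro r a s c κ hyp
    have e : ⟪a, ∫ t, p (x0 + t) ∂μ⟫_ℝ + κ * ∑ j, quadForm (X x0) (s j) =
        ∫ t, (⟪p (x0 + t), a⟫_ℝ + κ * ∑ j, ⟪fderiv ℝ p (x0 + t) (s j), s j⟫_ℝ) ∂μ := by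
      rw [integral_add (pvint _ _) ((integrable_finsetSum _ fun j _ => qint _ _).const_mul _),
        integral_const_mul, integral_finsetSum _ fun j _ => qint _ _, ← peq, real_inner_comm]
      simp only [qeq]
    rw [e]
    have h1 : ∫ _t, c ∂μ = c := by simp
    rw [← h1]
    refine integral_mono_ae (integrable_const _) ((pvint _ _).add
      ((integrable_finsetSum _ fun j _ => qint _ _).const_mul _)) ?_
    filter_upwards [hdiff x0, hμt] with t ht ht2
    have := hyp (x0 + t) _ (by simpa using ht2) ht.hasFDerivAt (hTn _)
    rwa [real_inner_comm] at this

end avg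

section approx
variable {n : ℕ}

lemma young_quad (T : EuclideanSpace ℝ (Fin n) →L[ℝ] EuclideanSpace ℝ (Fin n))
    (hpos : ∀ v, 0 ≤ ⟪T v, v⟫_ℝ) (η : ℝ) (hη : 0 < η) (a c : EuclideanSpace ℝ (Fin n)) :
    ⟪T a, a⟫_ℝ ≤ (1 + η) * ⟪T c, c⟫_ℝ + (1 + 1 / η) * ⟪T (a - c), a - c⟫_ℝ := by
  have h1 := hpos (η • c - (a - c))
  obtain ⟨w, rfl⟩ : ∃ w, a = c + w := ⟨a - c, by abel⟩
  simp only [add_sub_cancel_left] at h1 ⊢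
  simp only [map_sub, map_add, map_smul, inner_sub_left, inner_sub_right, inner_add_left,
    inner_add_right, real_inner_smul_left, inner_smul_right] at h1 ⊢
  have h2 : ⟪T c, w⟫_ℝ + ⟪T w, c⟫_ℝ ≤ η * ⟪T c, c⟫_ℝ + 1 / η * ⟪T w, w⟫_ℝ := by
    have h3 : η * (⟪T c, w⟫_ℝ + ⟪T w, c⟫_ℝ) ≤ η * (η * ⟪T c, c⟫_ℝ + 1 / η * ⟪T w, w⟫_ℝ) := by
      have : η * (1 / η * ⟪T w, w⟫_ℝ) = ⟪T w, w⟫_ℝ := by field_simp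
      rw [mul_add η (η * _), this]
      linarith
    exact le_of_mul_le_mul_left h3 hη
  linarith

lemma psd_of_peano (g : EuclideanSpace ℝ (Fin n) → ℝ)
    (p : EuclideanSpace ℝ (Fin n)) (x : EuclideanSpace ℝ (Fin n))
    (T : EuclideanSpace ℝ (Fin n) →L[ℝ] EuclideanSpace ℝ (Fin n))
    (hlo : ∀ v, 0 ≤ g (x + v) - g x - ⟪p, v⟫_ℝ)
    (hpe : ∀ ε > (0:ℝ), ∀ᶠ v in nhds (0 : EuclideanSpace ℝ (Fin n)),
      |g (x + v) - g x - ⟪p, v⟫_ℝ - (1 / 2) * ⟪T v, v⟫_ℝ| ≤ ε * ‖v‖ ^ 2) (v) :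
    0 ≤ ⟪T v, v⟫_ℝ := by
  have key : ∀ ε > (0:ℝ), 0 ≤ (1 / 2) * ⟪T v, v⟫_ℝ + ε * ‖v‖ ^ 2 := by
    intro ε hε
    have ht : Tendsto (fun s : ℝ => s • v) (nhdsWithin 0 (Set.Ioi 0)) (nhds 0) := by
      have : Tendsto (fun s : ℝ => s • v) (nhds 0) (nhds ((0:ℝ) • v)) :=
        (continuous_id.smul continuous_const).tendsto 0
      rw [zero_smul] at this
      exact this.mono_left nhdsWithin_le_nhds
    obtain ⟨s, hs, hs0⟩ := ((ht.eventually (hpe ε hε)).and self_mem_nhdsWithin).exists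
    have h1 := hlo (s • v)
    have h2 := (abs_le.mp hs).2
    rw [map_smul, real_inner_smul_left _ _ s, inner_smul_right (T v) v s, norm_smul, mul_pow,
      Real.norm_eq_abs, sq_abs] at h2
    have h3 : 0 ≤ s ^ 2 * ((1 / 2) * ⟪T v, v⟫_ℝ + ε * ‖v‖ ^ 2) := by nlinarith
    have hs2 : 0 < s ^ 2 := by have : 0 < s := hs0; positivity
    exact nonneg_of_mul_nonneg_right h3 hs2
  by_contra hc
  push Not at hc
  have hq := key (-⟪T v, v⟫_ℝ / (4 * (‖v‖ ^ 2 + 1))) (by apply div_pos <;> [linarith; positivity])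
  have : -⟪T v, v⟫_ℝ / (4 * (‖v‖ ^ 2 + 1)) * ‖v‖ ^ 2 ≤ -⟪T v, v⟫_ℝ / 4 := by
    rw [div_mul_eq_mul_div, div_le_div_iff₀ (by positivity) (by norm_num)]
    nlinarith [sq_nonneg ‖v‖]
  linarith

lemma inner_diff_bound (a b x y : EuclideanSpace ℝ (Fin n)) (A D ω κ : ℝ)
    (h1 : ‖a - b‖ ≤ κ) (h2 : ‖x - y‖ ≤ ω) (h3 : ‖x‖ ≤ D) (h4 : ‖b‖ ≤ A) :
    |⟪a, x⟫_ℝ - ⟪b, y⟫_ℝ| ≤ κ * D + A * ω := by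
  have e : ⟪a, x⟫_ℝ - ⟪b, y⟫_ℝ = ⟪a - b, x⟫_ℝ + ⟪b, x - y⟫_ℝ := by
    rw [inner_sub_left, inner_sub_right]; ring
  rw [e]
  refine (abs_add_le _ _).trans ?_
  have h5 := abs_real_inner_le_norm (a - b) x
  have h6 := abs_real_inner_le_norm b (x - y)
  have h7 : ‖a - b‖ * ‖x‖ ≤ κ * D := mul_le_mul h1 h3 (norm_nonneg _) ((norm_nonneg _).trans h1)
  have h8 : ‖b‖ * ‖x - y‖ ≤ A * ω := mul_le_mul h4 h2 (norm_nonneg _) ((norm_nonneg _).trans h4)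
  linarith

set_option maxHeartbeats 2000000 in
lemma smooth_approx {r : ℕ} (h : EuclideanSpace ℝ (Fin n) → ℝ) (R : ℝ) (hR : 0 ≤ R)
    (hconv : ∀ x y, ∀ s : ℝ, 0 ≤ s → s ≤ 1 → h (x + s • (y - x)) ≤ (1 - s) * h x + s * h y)
    (hLip : ∀ x y, h x - h y ≤ R * ‖x - y‖)
    (b : EuclideanSpace ℝ (Fin n) → EuclideanSpace ℝ (Fin n))
    (s : Fin r → EuclideanSpace ℝ (Fin n) → EuclideanSpace ℝ (Fin n))
    (xh : EuclideanSpace ℝ (Fin n)) (ρ B C : ℝ) (hρ : 0 < ρ) (hB : 0 ≤ B) (hC : 0 ≤ C)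
    (hbL : ∀ x ∈ Metric.closedBall xh (2 * ρ), ∀ y ∈ Metric.closedBall xh (2 * ρ),
      ‖b x - b y‖ ≤ B * ‖x - y‖)
    (hsL : ∀ j, ∀ x ∈ Metric.closedBall xh (2 * ρ), ∀ y ∈ Metric.closedBall xh (2 * ρ),
      ‖s j x - s j y‖ ≤ B * ‖x - y‖)
    (hbC : ∀ x ∈ Metric.closedBall xh (2 * ρ), ‖b x‖ ≤ C)
    (hsC : ∀ j, ∀ x ∈ Metric.closedBall xh (2 * ρ), ‖s j x‖ ≤ C)
    (c1 c2 : ℝ)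
    (hc1 : ∀ y ∈ Metric.closedBall xh (2 * ρ), ∀ (p : EuclideanSpace ℝ (Fin n))
      (X : Matrix (Fin n) (Fin n) ℝ), X.IsSymm →
      (∀ ε > (0:ℝ), ∀ᶠ v in nhds (0 : EuclideanSpace ℝ (Fin n)),
        ⟪p, v⟫_ℝ + (1 / 2) * quadForm X v - ε * ‖v‖ ^ 2 ≤ h (y + v) - h y) →
      c1 ≤ ⟪b y, y - p⟫_ℝ + ∑ j, (‖s j y‖ ^ 2 - quadForm X (s j y)))
    (hc2 : ∀ y ∈ Metric.closedBall xh (2 * ρ), ∀ p : EuclideanSpace ℝ (Fin n),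
      (∀ y', h y + ⟪p, y' - y⟫_ℝ ≤ h y') → ∀ j, |⟪s j y, y - p⟫_ℝ| ≤ c2)
    (e : ℝ) (he : 0 < e) :
    ∃ H : EuclideanSpace ℝ (Fin n) → ℝ, (∀ x, |H x - h x| ≤ e) ∧ Continuous H ∧
      ∀ x0 ∈ Metric.closedBall xh ρ, ∃ (P : EuclideanSpace ℝ (Fin n))
        (X : Matrix (Fin n) (Fin n) ℝ), X.IsSymm ∧
        (∀ ε > (0:ℝ), ∀ᶠ v in nhds (0 : EuclideanSpace ℝ (Fin n)),
          |H (x0 + v) - H x0 - ⟪P, v⟫_ℝ - (1 / 2) * quadForm X v| ≤ ε * ‖v‖ ^ 2) ∧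
        c1 - e ≤ ⟪b x0, x0 - P⟫_ℝ + ∑ j, (‖s j x0‖ ^ 2 - quadForm X (s j x0)) ∧
        ∀ j, |⟪s j x0, x0 - P⟫_ℝ| ≤ c2 + e := by
  set D : ℝ := ‖xh‖ + 2 * ρ + R with hDdef
  have hD : 0 ≤ D := by positivity
  set M : ℝ := C * D + r * C ^ 2 + |c1| with hM
  have hM0 : 0 ≤ M := by positivity
  set η : ℝ := e / (2 * (M + 1)) with hη
  have hη0 : 0 < η := by positivity
  have hηM : η * M ≤ e / 2 := by
    rw [hη, div_mul_eq_mul_div, div_le_div_iff₀ (by positivity) (by norm_num)]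
    nlinarith
  set K : ℝ := (B * D + C + r * (2 * C * B)) * (R + 1) + r * ((1 + 1 / η) * (B ^ 2 * (R + 1) ^ 2)) with hK
  have hK0 : 0 ≤ K := by positivity
  set τ : ℝ := min (ρ / (R + 1)) (e / (2 * (K + R ^ 2 + R + 1))) with hτdef
  have hτ : 0 < τ := lt_min (by positivity) (by positivity)
  have hτ1 : τ * (R + 1) ≤ ρ := by
    have := min_le_left (ρ / (R + 1)) (e / (2 * (K + R ^ 2 + R + 1)))
    rwa [← hτdef, le_div_iff₀ (by positivity)] at this
  have hτ2 : τ * (K + R ^ 2 + R + 1) ≤ e / 2 := by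
    have := min_le_right (ρ / (R + 1)) (e / (2 * (K + R ^ 2 + R + 1)))
    rw [← hτdef, le_div_iff₀ (by positivity)] at this
    linarith
  have hτK : τ * K ≤ e / 2 := by
    have : 0 ≤ τ * (R ^ 2 + R + 1) := by positivity
    nlinarith
  have hτR : τ * R ^ 2 + R * τ ≤ e / 2 := by
    have : 0 ≤ τ * (K + 1) := by positivity
    nlinarith
  obtain ⟨y, p, g, hxy, hpR, hsub, hlo, hhi, hpl, hgh, hhg, hcomp⟩ :=
    prox_props h R hR hconv hLip τ hτ
  obtain ⟨H, hH, hHc, havg⟩ := avg_lemma g p R τ hR hτ hpR hlo hhi hpl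
  refine ⟨H, ?_, hHc, ?_⟩
  · intro x
    have h1 := abs_le.mp (hH x)
    have h2 := hgh x
    have h3 := hhg x
    have : 0 ≤ τ * R ^ 2 := by positivity
    have : 0 ≤ R * τ := by positivity
    rw [abs_le]; constructor <;> linarith
  intro x0 hx0
  obtain ⟨P, X, hXs, hpe, hqint⟩ := havg x0
  -- location of `y x`
  have hx0' : ‖x0 - xh‖ ≤ ρ := by rwa [mem_closedBall_iff_norm] at hx0
  have hx02 : x0 ∈ Metric.closedBall xh (2 * ρ) := by
    rw [mem_closedBall_iff_norm]; linarith
  have hloc : ∀ x, ‖x - x0‖ ≤ τ → ‖x0 - y x‖ ≤ τ * (R + 1) := by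
    intro x hx
    have h1 : ‖x - y x‖ ≤ τ * R := by
      rw [hxy, norm_smul, Real.norm_of_nonneg hτ.le]; gcongr; exact hpR x
    have h2 : x0 - y x = (x - y x) - (x - x0) := by abel
    rw [h2]
    refine (norm_sub_le _ _).trans ?_
    linarith
  have hyS : ∀ x, ‖x - x0‖ ≤ τ → y x ∈ Metric.closedBall xh (2 * ρ) := by
    intro x hx
    have h1 := hloc x hx
    rw [mem_closedBall_iff_norm]
    have h2 : y x - xh = (x0 - xh) - (x0 - y x) := by abel
    rw [h2]
    refine (norm_sub_le _ _).trans ?_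
    linarith
  have hDb : ∀ w ∈ Metric.closedBall xh (2 * ρ), ∀ x, ‖w - p x‖ ≤ D := by
    intro w hw x
    rw [mem_closedBall_iff_norm] at hw
    have : w - p x = (w - xh) + xh - p x := by abel
    rw [this]
    refine (norm_sub_le _ _).trans ?_
    have := norm_add_le (w - xh) xh
    linarith [hpR x]
  refine ⟨P, X, hXs, hpe, ?_, ?_⟩
  · have := hqint r (-b x0) (fun j => s j x0)
      (c1 - e - ⟪b x0, x0⟫_ℝ - ∑ j, ‖s j x0‖ ^ 2) (-1) ?_
    · rw [inner_neg_left] at this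
      rw [inner_sub_right, Finset.sum_sub_distrib]
      linarith
    intro x T hx hT hTn
    have hpeano := fun ε hε => peano_of_grad g p (1 / (2 * τ)) hlo
          (fun x v => (hhi x v).trans (by rw [div_mul_eq_mul_div, one_mul])) x T hT ε hε
    have hpos := psd_of_peano g (p x) x T (hlo x) hpeano
    have h1 := hc1 (y x) (hyS x hx) (p x) (symMat T) (symMat_symm T) (by
      intro ε hε
      filter_upwards [hpeano ε hε] with v hv
      have := (abs_le.mp hv).1
      have := hcomp x v
      rw [quadForm_symMat]
      linarith)
    simp only [quadForm_symMat, Finset.sum_sub_distrib] at h1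
    have hω := hloc x hx
    set ω := τ * (R + 1) with hωdef
    have hω0 : 0 ≤ ω := by positivity
    have hyx := hyS x hx
    have hbd := inner_diff_bound (b x0) (b (y x)) (x0 - p x) (y x - p x) C D ω (B * ω)
      ((hbL _ hx02 _ hyx).trans (by gcongr)) (by rwa [sub_sub_sub_cancel_right])
      (hDb _ hx02 x) (hbC _ hyx)
    have hsd : ∀ j, ‖s j (y x)‖ ^ 2 - 2 * C * B * ω ≤ ‖s j x0‖ ^ 2 := by
      intro j
      have a1 : ‖s j x0 - s j (y x)‖ ≤ B * ω := (hsL j _ hx02 _ hyx).trans (by gcongr)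
      have a2 := hsC j _ hx02
      have a3 := hsC j _ hyx
      have a4 : ‖s j (y x)‖ ≤ ‖s j x0‖ + B * ω := by
        have := norm_le_norm_add_norm_sub' (s j (y x)) (s j x0)
        rw [norm_sub_rev] at this
        linarith
      have : 0 ≤ B * ω := by positivity
      nlinarith [norm_nonneg (s j (y x)), norm_nonneg (s j x0)]
    have hsq : ∀ j, ⟪T (s j x0), s j x0⟫_ℝ ≤ (1 + η) * ⟪T (s j (y x)), s j (y x)⟫_ℝ +
        (1 + 1 / η) * (B ^ 2 * (R + 1) ^ 2) * τ := by
      intro j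
      refine (young_quad T hpos η hη0 (s j x0) (s j (y x))).trans ?_
      have a1 : ‖s j x0 - s j (y x)‖ ≤ B * ω := (hsL j _ hx02 _ hyx).trans (by gcongr)
      have a2 := (le_abs_self _).trans (quadForm_bound T _ hTn (s j x0 - s j (y x)))
      have a3 : τ⁻¹ * ‖s j x0 - s j (y x)‖ ^ 2 ≤ τ⁻¹ * (B * ω) ^ 2 := by gcongr
      have a4 : τ⁻¹ * (B * ω) ^ 2 = (B ^ 2 * (R + 1) ^ 2) * τ := by
        rw [hωdef]; field_simp
      have a5 : (1 + 1 / η) * ⟪T (s j x0 - s j (y x)), s j x0 - s j (y x)⟫_ℝ ≤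
        (1 + 1 / η) * ((B ^ 2 * (R + 1) ^ 2) * τ) := by
        apply mul_le_mul_of_nonneg_left _ (by positivity)
        linarith
      linarith
    have S1 : ∑ j, ‖s j (y x)‖ ^ 2 - r * (2 * C * B * ω) ≤ ∑ j, ‖s j x0‖ ^ 2 := by
      have := Finset.sum_le_sum fun j (_ : j ∈ Finset.univ) => hsd j
      simpa [Finset.sum_sub_distrib] using this
    have S2 : ∑ j, ⟪T (s j x0), s j x0⟫_ℝ ≤ (1 + η) * ∑ j, ⟪T (s j (y x)), s j (y x)⟫_ℝ +
        r * ((1 + 1 / η) * (B ^ 2 * (R + 1) ^ 2) * τ) := by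
      have := Finset.sum_le_sum fun j (_ : j ∈ Finset.univ) => hsq j
      simpa [Finset.sum_add_distrib, Finset.mul_sum] using this
    have S3 : ∑ j, ‖s j (y x)‖ ^ 2 ≤ r * C ^ 2 := by
      have : ∀ j ∈ Finset.univ, ‖s j (y x)‖ ^ 2 ≤ C ^ 2 := fun j _ => by
        gcongr; exact hsC j _ hyx
      simpa using Finset.sum_le_sum this
    have S4 : ⟪b (y x), y x - p x⟫_ℝ ≤ C * D := (real_inner_le_norm _ _).trans
      (mul_le_mul (hbC _ hyx) (hDb _ hyx x) (norm_nonneg _) hC)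
    have S5 : ∑ j, ⟪T (s j (y x)), s j (y x)⟫_ℝ ≤ M := by
      have := neg_abs_le c1
      linarith
    have S6 : η * ∑ j, ⟪T (s j (y x)), s j (y x)⟫_ℝ ≤ e / 2 :=
      (mul_le_mul_of_nonneg_left S5 hη0.le).trans hηM
    have hbd' := (abs_le.mp hbd).1
    have S7 : B * ω * D + C * ω + r * (2 * C * B * ω) +
      r * ((1 + 1 / η) * (B ^ 2 * (R + 1) ^ 2) * τ) = τ * K := by
      rw [hωdef, hK]; ring
    rw [inner_sub_right (b x0) x0] at hbd'
    rw [inner_neg_left]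
    linarith
  · intro j
    have hmain : ∀ x, ‖x - x0‖ ≤ τ → |⟪s j x0, x0 - p x⟫_ℝ| ≤ c2 + e := by
      intro x hx
      have hω := hloc x hx
      set ω := τ * (R + 1) with hωdef
      have hω0 : 0 ≤ ω := by positivity
      have hyx := hyS x hx
      have hbd := inner_diff_bound (s j x0) (s j (y x)) (x0 - p x) (y x - p x) C D ω (B * ω)
        ((hsL j _ hx02 _ hyx).trans (by gcongr)) (by rwa [sub_sub_sub_cancel_right])
        (hDb _ hx02 x) (hsC j _ hyx)
      have h1 := abs_le.mp (hc2 (y x) hyx (p x) (hsub x) j)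
      have S7 : B * ω * D + C * ω ≤ τ * K := by
        have : 0 ≤ r * (2 * C * B * ω) + r * ((1 + 1 / η) * (B ^ 2 * (R + 1) ^ 2) * τ) := by
          positivity
        have : B * ω * D + C * ω + (r * (2 * C * B * ω) +
          r * ((1 + 1 / η) * (B ^ 2 * (R + 1) ^ 2) * τ)) = τ * K := by
          rw [hωdef, hK]; ring
        linarith
      have hbd' := abs_le.mp hbd
      rw [abs_le]; constructor <;> linarith
    have i1 := hqint 0 (s j x0) (fun _ => 0) (⟪s j x0, x0⟫_ℝ - (c2 + e)) 0 (by
      intro x T hx _ _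
      have := (abs_le.mp (hmain x hx)).2
      rw [inner_sub_right] at this
      simp only [zero_mul, add_zero]
      linarith)
    have i2 := hqint 0 (-s j x0) (fun _ => 0) (-⟪s j x0, x0⟫_ℝ - (c2 + e)) 0 (by
      intro x T hx _ _
      have := (abs_le.mp (hmain x hx)).1
      rw [inner_sub_right] at this
      simp only [zero_mul, add_zero, inner_neg_left]
      linarith)
    simp only [zero_mul, add_zero, inner_neg_left] at i1 i2
    rw [inner_sub_right, abs_le]; constructor <;> linarith

end approx

section dist
variable {n : ℕ}

def hfun (Ω : Set (EuclideanSpace ℝ (Fin n))) (x : EuclideanSpace ℝ (Fin n)) : ℝ :=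
  (‖x‖ ^ 2 - bdist Ω x ^ 2) / 2

lemma bdist_lip (Ω : Set (EuclideanSpace ℝ (Fin n))) (x y : EuclideanSpace ℝ (Fin n)) :
    bdist Ω x ≤ bdist Ω y + ‖x - y‖ := by
  rw [← dist_eq_norm]; exact Metric.infDist_le_infDist_add_dist

lemma bdist_nonneg (Ω : Set (EuclideanSpace ℝ (Fin n))) (x : EuclideanSpace ℝ (Fin n)) :
    0 ≤ bdist Ω x := Metric.infDist_nonneg

lemma bdist_cont (Ω : Set (EuclideanSpace ℝ (Fin n))) : Continuous (bdist Ω) :=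
  Metric.continuous_infDist_pt _

lemma hfun_ge (Ω : Set (EuclideanSpace ℝ (Fin n))) (x z : EuclideanSpace ℝ (Fin n))
    (hz : z ∈ frontier Ω) : ⟪x, z⟫_ℝ - ‖z‖ ^ 2 / 2 ≤ hfun Ω x := by
  have h1 : bdist Ω x ≤ ‖x - z‖ := by
    rw [← dist_eq_norm]; exact Metric.infDist_le_dist_of_mem hz
  have h2 : bdist Ω x ^ 2 ≤ ‖x - z‖ ^ 2 := by
    have := bdist_nonneg Ω x
    gcongr
  rw [norm_sub_sq_real] at h2
  unfold hfun
  linarith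

lemma hfun_proj (Ω : Set (EuclideanSpace ℝ (Fin n))) (hc : IsCompact (frontier Ω))
    (hne : (frontier Ω).Nonempty) (x : EuclideanSpace ℝ (Fin n)) :
    ∃ z ∈ frontier Ω, bdist Ω x = ‖x - z‖ ∧ hfun Ω x = ⟪x, z⟫_ℝ - ‖z‖ ^ 2 / 2 := by
  obtain ⟨z, hz, h1⟩ := hc.exists_infDist_eq_dist hne x
  have h2 : bdist Ω x = ‖x - z‖ := by rw [← dist_eq_norm]; exact h1
  refine ⟨z, hz, h2, ?_⟩
  unfold hfun
  rw [h2, norm_sub_sq_real]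
  ring

lemma hfun_conv (Ω : Set (EuclideanSpace ℝ (Fin n))) (hc : IsCompact (frontier Ω))
    (hne : (frontier Ω).Nonempty) (x y : EuclideanSpace ℝ (Fin n)) (s : ℝ) (hs : 0 ≤ s)
    (hs1 : s ≤ 1) : hfun Ω (x + s • (y - x)) ≤ (1 - s) * hfun Ω x + s * hfun Ω y := by
  obtain ⟨z, hz, -, h2⟩ := hfun_proj Ω hc hne (x + s • (y - x))
  have h3 := mul_le_mul_of_nonneg_left (hfun_ge Ω x z hz) (sub_nonneg.mpr hs1)
  have h4 := mul_le_mul_of_nonneg_left (hfun_ge Ω y z hz) hs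
  rw [h2, inner_add_left, real_inner_smul_left, inner_sub_left]
  linarith

lemma hfun_lip (Ω : Set (EuclideanSpace ℝ (Fin n))) (hc : IsCompact (frontier Ω))
    (hne : (frontier Ω).Nonempty) (R : ℝ) (hR : ∀ z ∈ frontier Ω, ‖z‖ ≤ R)
    (x y : EuclideanSpace ℝ (Fin n)) : hfun Ω x - hfun Ω y ≤ R * ‖x - y‖ := by
  obtain ⟨z, hz, -, h2⟩ := hfun_proj Ω hc hne x
  have h3 := hfun_ge Ω y z hz
  have h4 := real_inner_le_norm (x - y) z
  have h5 : ‖x - y‖ * ‖z‖ ≤ ‖x - y‖ * R := by gcongr; exact hR z hz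
  rw [inner_sub_left] at h4
  linarith

lemma bd_ball_sub (Ω : Set (EuclideanSpace ℝ (Fin n)))
    (x y : EuclideanSpace ℝ (Fin n)) (hx : x ∈ Ω) (hy : ‖y - x‖ < bdist Ω x) : y ∈ Ω := by
  by_contra hyc
  have hpc : IsPreconnected (Metric.ball x (bdist Ω x)) := (convex_ball x _).isPreconnected
  have hyb : y ∈ Metric.ball x (bdist Ω x) := by rwa [mem_ball_iff_norm]
  have h0 : 0 < bdist Ω x := lt_of_le_of_lt (norm_nonneg _) hy
  have hfr : ∀ w ∈ Metric.ball x (bdist Ω x), w ∉ frontier Ω := by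
    intro w hw hwf
    have h1 : bdist Ω x ≤ dist x w := Metric.infDist_le_dist_of_mem hwf
    rw [Metric.mem_ball, dist_comm] at hw
    linarith
  have hcov : ∀ w ∈ Metric.ball x (bdist Ω x), w ∈ interior Ω ∨ w ∈ (closure Ω)ᶜ := by
    intro w hw
    by_contra hcon
    push Not at hcon
    exact hfr w hw ⟨Set.notMem_compl_iff.mp hcon.2, hcon.1⟩
  have hxb := Metric.mem_ball_self (x := x) h0
  obtain ⟨w, -, hw1, hw2⟩ := hpc (interior Ω) (closure Ω)ᶜ isOpen_interior
    isClosed_closure.isOpen_compl hcov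
    ⟨x, hxb, (hcov x hxb).resolve_right fun h => h (subset_closure hx)⟩
    ⟨y, hyb, (hcov y hyb).resolve_left fun h => hyc (interior_subset h)⟩
  exact hw2 (subset_closure (interior_subset hw1))

lemma bdist_pos (Ω : Set (EuclideanSpace ℝ (Fin n))) (hΩ : IsOpen Ω)
    (hne : (frontier Ω).Nonempty)
    (x : EuclideanSpace ℝ (Fin n)) (hx : x ∈ Ω) : 0 < bdist Ω x := by
  refine (isClosed_frontier.notMem_iff_infDist_pos hne).mp ?_
  intro h
  rw [hΩ.frontier_eq] at h
  exact h.2 hx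

lemma quadForm_combo (a : ℝ) (X : Matrix (Fin n) (Fin n) ℝ) (v : EuclideanSpace ℝ (Fin n)) :
    quadForm (a • (1 - X)) v = a * (‖v‖ ^ 2 - quadForm X v) := by
  have e : ‖v‖ ^ 2 = ∑ i, ∑ j, (1 : Matrix (Fin n) (Fin n) ℝ) i j * v i * v j := by
    rw [EuclideanSpace.norm_sq_eq]
    refine Finset.sum_congr rfl fun i _ => ?_
    simp [Matrix.one_apply, sq]
  unfold quadForm
  rw [e, ← Finset.sum_sub_distrib, Finset.mul_sum]
  refine Finset.sum_congr rfl fun i _ => ?_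
  rw [← Finset.sum_sub_distrib, Finset.mul_sum]
  refine Finset.sum_congr rfl fun j _ => ?_
  simp only [Matrix.smul_apply, Matrix.sub_apply, smul_eq_mul]
  ring

lemma jet_of_hfun (Ω : Set (EuclideanSpace ℝ (Fin n))) (y : EuclideanSpace ℝ (Fin n))
    (hd : 0 < bdist Ω y) (p : EuclideanSpace ℝ (Fin n)) (X : Matrix (Fin n) (Fin n) ℝ)
    (hX : X.IsSymm)
    (hj : ∀ ε > (0:ℝ), ∀ᶠ v in nhds (0 : EuclideanSpace ℝ (Fin n)),
        ⟪p, v⟫_ℝ + (1 / 2) * quadForm X v - ε * ‖v‖ ^ 2 ≤ hfun Ω (y + v) - hfun Ω y) :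
    ((bdist Ω y)⁻¹ • (y - p), (bdist Ω y)⁻¹ • (1 - X)) ∈ J2plus (closure Ω) (bdist Ω) y := by
  refine ⟨?_, ?_⟩
  · exact (Matrix.isSymm_one.sub hX).smul _
  intro ε hε
  have h1 := hj (ε * bdist Ω y) (by positivity)
  have ht : Tendsto (fun w => w - y) (nhds y) (nhds 0) := by
    have : Continuous (fun w => w - y) := by fun_prop
    simpa using this.tendsto y
  refine ((ht.eventually h1).filter_mono nhdsWithin_le_nhds).mono ?_
  intro w hw
  simp only
  rw [quadForm_combo, real_inner_smul_left]
  set v := w - y with hv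
  have hwv : w = y + v := by rw [hv]; abel
  rw [← hwv] at hw
  have hsq : bdist Ω w ^ 2 - bdist Ω y ^ 2 = 2 * ⟪y, v⟫_ℝ + ‖v‖ ^ 2 - 2 * (hfun Ω w - hfun Ω y) := by
    unfold hfun
    have : ‖w‖ ^ 2 = ‖y‖ ^ 2 + 2 * ⟪y, v⟫_ℝ + ‖v‖ ^ 2 := by rw [hwv, norm_add_sq_real]
    rw [this]; ring
  have h2 : (bdist Ω w - bdist Ω y) * bdist Ω y ≤ (bdist Ω w ^ 2 - bdist Ω y ^ 2) / 2 := by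
    nlinarith [sq_nonneg (bdist Ω w - bdist Ω y)]
  have h3 : (bdist Ω w - bdist Ω y) * bdist Ω y ≤ ⟪y - p, v⟫_ℝ + (1/2) * (‖v‖ ^ 2 - quadForm X v)
      + ε * bdist Ω y * ‖v‖ ^ 2 := by
    rw [inner_sub_left]; linarith
  have h4 : bdist Ω w - bdist Ω y ≤ (⟪y - p, v⟫_ℝ + (1/2) * (‖v‖ ^ 2 - quadForm X v)
      + ε * bdist Ω y * ‖v‖ ^ 2) / bdist Ω y := by
    rwa [le_div_iff₀ hd]
  have h5 : (⟪y - p, v⟫_ℝ + (1/2) * (‖v‖ ^ 2 - quadForm X v)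
      + ε * bdist Ω y * ‖v‖ ^ 2) / bdist Ω y = (bdist Ω y)⁻¹ * ⟪y - p, v⟫_ℝ +
      1 / 2 * ((bdist Ω y)⁻¹ * (‖v‖ ^ 2 - quadForm X v)) + ε * ‖v‖ ^ 2 := by
    field_simp
  linarith

/-- tangentiality estimate -/
lemma tangential (Ω : Set (EuclideanSpace ℝ (Fin n))) (hc : IsCompact (frontier Ω))
    (hne : (frontier Ω).Nonempty) (a : EuclideanSpace ℝ (Fin n) → EuclideanSpace ℝ (Fin n))
    (B : ℝ) (hB : 0 ≤ B) (δ0 : ℝ) (z y p : EuclideanSpace ℝ (Fin n))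
    (hyΩ : y ∈ Ω) (hd : 0 < bdist Ω y) (hyz : bdist Ω y + ‖y - z‖ < δ0)
    (haL : ∀ w ∈ frontier Ω, ‖a y - a w‖ ≤ B * ‖y - w‖)
    (hperp : ∀ w ∈ frontier Ω ∩ Metric.ball z δ0, ∀ ν ∈ normalDirs Ω w, ⟪a w, ν⟫_ℝ = 0)
    (hp : ∀ y', hfun Ω y + ⟪p, y' - y⟫_ℝ ≤ hfun Ω y') :
    |⟪a y, y - p⟫_ℝ| ≤ B * bdist Ω y ^ 2 := by
  have key : ∀ c : ℝ, |c| = 1 → -(B * bdist Ω y ^ 2) ≤ ⟪c • a y, y - p⟫_ℝ := by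
    intro c hcc
    set v := c • a y with hv
    set V := ‖v‖ with hV
    set d := bdist Ω y with hddef
    have hbound : ∀ᶠ t in nhdsWithin (0:ℝ) (Set.Ioi 0),
        -(t * V ^ 2 + B * (d + 2 * (t * V)) * (d + t * V)) ≤ ⟪v, y - p⟫_ℝ := by
      have e1 : ∀ᶠ t in nhdsWithin (0:ℝ) (Set.Ioi 0), t * V < d := by
        have : Tendsto (fun t : ℝ => t * V) (nhds 0) (nhds (0 * V)) :=
          (continuous_id.mul continuous_const).tendsto 0
        rw [zero_mul] at this
        exact (this.eventually_lt_const hd).filter_mono nhdsWithin_le_nhds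
      have e2 : ∀ᶠ t in nhdsWithin (0:ℝ) (Set.Ioi 0), d + ‖y - z‖ + 2 * (t * V) < δ0 := by
        have : Tendsto (fun t : ℝ => d + ‖y - z‖ + 2 * (t * V)) (nhds 0)
          (nhds (d + ‖y - z‖ + 2 * (0 * V))) :=
          (by fun_prop : Continuous (fun t : ℝ => d + ‖y - z‖ + 2 * (t * V))).tendsto 0
        rw [zero_mul, mul_zero, add_zero] at this
        exact (this.eventually_lt_const hyz).filter_mono nhdsWithin_le_nhds
      filter_upwards [e1, e2, self_mem_nhdsWithin] with t h1 h2 ht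
      have ht : 0 < t := ht
      have htV : ‖t • v‖ = t * V := by rw [norm_smul, Real.norm_of_nonneg ht.le]
      set w := y + t • v with hw
      have hwΩ : w ∈ Ω := bd_ball_sub Ω y w hyΩ (by rw [hw, add_sub_cancel_left, htV]; exact h1)
      obtain ⟨ζ, hζ, hdζ, hhζ⟩ := hfun_proj Ω hc hne w
      have hdw : bdist Ω w ≤ d + t * V := by
        have := bdist_lip Ω w y
        rwa [hw, add_sub_cancel_left, htV] at this
      have hdw0 : 0 < bdist Ω w := by
        have := bdist_lip Ω y w
        rw [hw, sub_add_cancel_left, norm_neg, htV] at this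
        rw [hw]; linarith
      have hyζ : ‖y - ζ‖ ≤ bdist Ω w + t * V := by
        have : y - ζ = (w - ζ) - t • v := by rw [hw]; abel
        rw [this]
        refine (norm_sub_le _ _).trans ?_
        rw [htV, hdζ]
      have hζz : ζ ∈ frontier Ω ∩ Metric.ball z δ0 := by
        refine ⟨hζ, ?_⟩
        rw [mem_ball_iff_norm]
        have : ζ - z = (y - z) - (y - ζ) := by abel
        rw [this]
        refine (norm_sub_le _ _).trans_lt ?_
        linarith
      have hperp' : ⟪a ζ, w - ζ⟫_ℝ = 0 := by
        have := hperp ζ hζz ((bdist Ω w)⁻¹ • (w - ζ)) (by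
          refine ⟨?_, w, hwΩ, ?_⟩
          · rw [norm_smul, ← hdζ, Real.norm_of_nonneg (by positivity)]
            field_simp
          · rw [smul_smul, mul_inv_cancel₀ hdw0.ne', one_smul]; abel)
        rw [inner_smul_right] at this
        exact (mul_eq_zero.mp this).resolve_left (by positivity)
      have h3 : ⟪p, v⟫_ℝ ≤ ⟪v, ζ⟫_ℝ := by
        have a1 := hp w
        have a2 := hfun_ge Ω y ζ hζ
        rw [hhζ] at a1
        have a3 : t * ⟪p, v⟫_ℝ ≤ t * ⟪v, ζ⟫_ℝ := by
          rw [hw, add_sub_cancel_left, inner_smul_right, inner_add_left, real_inner_smul_left] at a1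
          linarith
        exact le_of_mul_le_mul_left a3 ht
      have h4 : |⟪v, w - ζ⟫_ℝ| ≤ B * (d + 2 * (t * V)) * (d + t * V) := by
        have : ⟪v, w - ζ⟫_ℝ = c * ⟪a y - a ζ, w - ζ⟫_ℝ := by
          rw [inner_sub_left, hperp', hv, real_inner_smul_left, sub_zero]
        rw [this, abs_mul, hcc, one_mul]
        refine (abs_real_inner_le_norm _ _).trans ?_
        rw [← hdζ]
        have : ‖a y - a ζ‖ ≤ B * (d + 2 * (t * V)) := (haL ζ hζ).trans (by gcongr; linarith)
        exact mul_le_mul this hdw hdw0.le ((norm_nonneg _).trans this)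
      have h5 : ⟪v, w - ζ⟫_ℝ = ⟪v, y⟫_ℝ + t * V ^ 2 - ⟪v, ζ⟫_ℝ := by
        rw [hw, inner_sub_right, inner_add_right, inner_smul_right, real_inner_self_eq_norm_sq]
      have h6 := (abs_le.mp h4).1
      rw [inner_sub_right]
      rw [real_inner_comm v p] at h3
      linarith
    have hlim : Tendsto (fun t : ℝ => -(t * V ^ 2 + B * (d + 2 * (t * V)) * (d + t * V)))
        (nhdsWithin 0 (Set.Ioi 0)) (nhds (-(0 * V ^ 2 + B * (d + 2 * (0 * V)) * (d + 0 * V)))) :=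
      ((by fun_prop : Continuous (fun t : ℝ =>
        -(t * V ^ 2 + B * (d + 2 * (t * V)) * (d + t * V)))).tendsto 0).mono_left nhdsWithin_le_nhds
    have := le_of_tendsto hlim hbound
    refine le_trans (le_of_eq ?_) this
    ring
  have k1 := key 1 (by simp)
  have k2 := key (-1) (by simp)
  rw [one_smul] at k1
  rw [neg_one_smul, inner_neg_left] at k2
  rw [abs_le]; constructor <;> linarith

end dist

section touch
variable {n : ℕ}

lemma quadForm_abs (X : Matrix (Fin n) (Fin n) ℝ) (v : EuclideanSpace ℝ (Fin n)) :
    |quadForm X v| ≤ (∑ i, ∑ j, |X i j|) * ‖v‖ ^ 2 := by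
  unfold quadForm
  have hv : ∀ i, |v i| ≤ ‖v‖ := fun i => by
    have := PiLp.norm_apply_le v i
    simpa using this
  rw [Finset.sum_mul]
  refine (Finset.abs_sum_le_sum_abs _ _).trans (Finset.sum_le_sum fun i _ => ?_)
  rw [Finset.sum_mul]
  refine (Finset.abs_sum_le_sum_abs _ _).trans (Finset.sum_le_sum fun j _ => ?_)
  rw [abs_mul, abs_mul, mul_assoc, sq]
  have := hv i
  have := hv j
  gcongr

lemma quad_comp (f : EuclideanSpace ℝ (Fin n) → ℝ) (Q : EuclideanSpace ℝ (Fin n))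
    (q : EuclideanSpace ℝ (Fin n) → ℝ) (K : ℝ) (hK : ∀ v, |q v| ≤ K * ‖v‖ ^ 2)
    (hf : ∀ ε > (0:ℝ), ∀ᶠ v in nhds (0 : EuclideanSpace ℝ (Fin n)),
      |f v - ⟪Q, v⟫_ℝ - q v| ≤ ε * ‖v‖ ^ 2) (ε : ℝ) (hε : 0 < ε) :
    ∀ᶠ v in nhds (0 : EuclideanSpace ℝ (Fin n)), |f v ^ 2 - ⟪Q, v⟫_ℝ ^ 2| ≤ ε * ‖v‖ ^ 2 := by
  set L := |K| + 1 with hL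
  have hL0 : 0 < L := by positivity
  have e2 : ∀ᶠ v in nhds (0 : EuclideanSpace ℝ (Fin n)),
      L * (2 * (‖Q‖ * ‖v‖) + L * ‖v‖ ^ 2) < ε := by
    have : Continuous fun v : EuclideanSpace ℝ (Fin n) =>
      L * (2 * (‖Q‖ * ‖v‖) + L * ‖v‖ ^ 2) := by fun_prop
    refine (this.tendsto 0).eventually_lt_const ?_
    simpa using hε
  filter_upwards [hf 1 one_pos, e2] with v h1 h2
  have h3 : |f v - ⟪Q, v⟫_ℝ| ≤ L * ‖v‖ ^ 2 := by
    have a1 := abs_add_le (f v - ⟪Q, v⟫_ℝ - q v) (q v)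
    rw [sub_add_cancel] at a1
    have a2 := hK v
    have a3 : K * ‖v‖ ^ 2 ≤ |K| * ‖v‖ ^ 2 := by gcongr; exact le_abs_self K
    rw [hL]; linarith
  have h4 : |f v + ⟪Q, v⟫_ℝ| ≤ 2 * (‖Q‖ * ‖v‖) + L * ‖v‖ ^ 2 := by
    have a1 := abs_add_le (f v - ⟪Q, v⟫_ℝ) (2 * ⟪Q, v⟫_ℝ)
    have a2 : |2 * ⟪Q, v⟫_ℝ| ≤ 2 * (‖Q‖ * ‖v‖) := by
      rw [abs_mul, abs_two]; gcongr; exact abs_real_inner_le_norm _ _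
    have a3 : f v - ⟪Q, v⟫_ℝ + 2 * ⟪Q, v⟫_ℝ = f v + ⟪Q, v⟫_ℝ := by ring
    rw [a3] at a1; linarith
  have h5 : f v ^ 2 - ⟪Q, v⟫_ℝ ^ 2 = (f v - ⟪Q, v⟫_ℝ) * (f v + ⟪Q, v⟫_ℝ) := by ring
  rw [h5, abs_mul]
  calc _ ≤ (L * ‖v‖ ^ 2) * (2 * (‖Q‖ * ‖v‖) + L * ‖v‖ ^ 2) := by gcongr
    _ = L * (2 * (‖Q‖ * ‖v‖) + L * ‖v‖ ^ 2) * ‖v‖ ^ 2 := by ring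
    _ ≤ _ := by gcongr

def outerM (Q : EuclideanSpace ℝ (Fin n)) : Matrix (Fin n) (Fin n) ℝ := fun i j => Q i * Q j

def jetM (a D κ : ℝ) (X : Matrix (Fin n) (Fin n) ℝ) (Q : EuclideanSpace ℝ (Fin n)) :
    Matrix (Fin n) (Fin n) ℝ := a • (1 - X) + D • outerM Q + κ • 1

lemma quadForm_jetM (a D κ : ℝ) (X : Matrix (Fin n) (Fin n) ℝ) (Q v : EuclideanSpace ℝ (Fin n)) :
    quadForm (jetM a D κ X Q) v
      = a * (‖v‖ ^ 2 - quadForm X v) + D * ⟪Q, v⟫_ℝ ^ 2 + κ * ‖v‖ ^ 2 := by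
  have e1 := quadForm_combo a X v
  have e2 := quadForm_combo κ 0 v
  have e0 : quadForm (0 : Matrix (Fin n) (Fin n) ℝ) v = 0 := by simp [quadForm]
  rw [e0, sub_zero, sub_zero] at e2
  rw [← e1, ← e2]
  have e3 : ⟪Q, v⟫_ℝ ^ 2 = ∑ i, ∑ j, outerM Q i j * v i * v j := by
    rw [sq, PiLp.inner_apply, Finset.sum_mul_sum]
    refine Finset.sum_congr rfl fun i _ => Finset.sum_congr rfl fun j _ => ?_
    simp [outerM]; ring
  rw [e3]
  unfold quadForm jetM
  simp only [Finset.mul_sum, ← Finset.sum_add_distrib]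
  refine Finset.sum_congr rfl fun i _ => Finset.sum_congr rfl fun j _ => ?_
  simp only [Matrix.add_apply, Matrix.smul_apply, smul_eq_mul]
  ring

lemma jetM_symm (a D κ : ℝ) (X : Matrix (Fin n) (Fin n) ℝ) (hX : X.IsSymm)
    (Q : EuclideanSpace ℝ (Fin n)) : (jetM a D κ X Q).IsSymm := by
  have h1 : (outerM Q).IsSymm := by
    ext i j; simp [outerM, Matrix.transpose_apply, mul_comm]
  exact (((Matrix.isSymm_one.sub hX).smul _).add (h1.smul _)).add (Matrix.isSymm_one.smul _)

lemma jet_compose (Ω : Set (EuclideanSpace ℝ (Fin n))) (u H : EuclideanSpace ℝ (Fin n) → ℝ)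
    (x0 xh P : EuclideanSpace ℝ (Fin n)) (X : Matrix (Fin n) (Fin n) ℝ) (hX : X.IsSymm)
    (hH : ∀ ε > (0:ℝ), ∀ᶠ v in nhds (0 : EuclideanSpace ℝ (Fin n)),
          |H (x0 + v) - H x0 - ⟪P, v⟫_ℝ - (1 / 2) * quadForm X v| ≤ ε * ‖v‖ ^ 2)
    (A D κ : ℝ) (hA : 0 ≤ A) (hD : 0 ≤ D)
    (hmax : ∀ᶠ v in nhds (0 : EuclideanSpace ℝ (Fin n)), u (x0 + v) - u x0 ≤
      - A * (⟪x0, v⟫_ℝ + ‖v‖ ^ 2 / 2 - (H (x0 + v) - H x0))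
      + D * (⟪x0, v⟫_ℝ + ‖v‖ ^ 2 / 2 - (H (x0 + v) - H x0)) ^ 2
      + κ * (2 * ⟪x0 - xh, v⟫_ℝ + ‖v‖ ^ 2)) :
    ((-A) • (x0 - P) + (2 * κ) • (x0 - xh), jetM (-A) (2 * D) (2 * κ) X (x0 - P))
      ∈ J2plus Ω u x0 := by
  refine ⟨jetM_symm _ _ _ _ hX _, ?_⟩
  intro ε hε
  set f : EuclideanSpace ℝ (Fin n) → ℝ :=
    fun v => ⟪x0, v⟫_ℝ + ‖v‖ ^ 2 / 2 - (H (x0 + v) - H x0) with hf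
  set q : EuclideanSpace ℝ (Fin n) → ℝ := fun v => (1/2) * (‖v‖ ^ 2 - quadForm X v) with hq
  have hq' : ∀ v, |q v| ≤ (1 + ∑ i, ∑ j, |X i j|) * ‖v‖ ^ 2 := by
    intro v
    have := abs_le.mp (quadForm_abs X v)
    have h2 := sq_nonneg ‖v‖
    rw [abs_le]; simp only [hq]
    constructor <;> nlinarith
  have hp : ∀ ε > (0:ℝ), ∀ᶠ v in nhds (0 : EuclideanSpace ℝ (Fin n)),
      |f v - ⟪x0 - P, v⟫_ℝ - q v| ≤ ε * ‖v‖ ^ 2 := by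
    intro ε hε
    filter_upwards [hH ε hε] with v hv
    have : f v - ⟪x0 - P, v⟫_ℝ - q v
        = -(H (x0 + v) - H x0 - ⟪P, v⟫_ℝ - (1 / 2) * quadForm X v) := by
      simp only [hf, hq, inner_sub_left]; ring
    rw [this, abs_neg]; exact hv
  have e1 := hp (ε / (2 * (A + 1))) (by positivity)
  have e2 := quad_comp f (x0 - P) q _ hq' hp (ε / (2 * (D + 1))) (by positivity)
  have ht : Tendsto (fun w => w - x0) (nhds x0) (nhds 0) := by
    have : Continuous (fun w => w - x0) := by fun_prop
    simpa using this.tendsto x0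
  refine ((ht.eventually (hmax.and (e1.and e2))).filter_mono nhdsWithin_le_nhds).mono ?_
  rintro w ⟨h1, h2, h3⟩
  simp only
  rw [quadForm_jetM]
  set v := w - x0 with hv
  have hwv : w = x0 + v := by rw [hv]; abel
  rw [← hwv] at h1
  rw [inner_add_left, real_inner_smul_left, real_inner_smul_left]
  have h1' : u w - u x0 ≤ - A * f v + D * f v ^ 2 + κ * (2 * ⟪x0 - xh, v⟫_ℝ + ‖v‖ ^ 2) := by
    simp only [hf, ← hwv]; exact h1
  have h2' := mul_le_mul_of_nonneg_left (abs_le.mp h2).1 hA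
  have h3' := mul_le_mul_of_nonneg_left (abs_le.mp h3).2 hD
  have h4 : A * (ε / (2 * (A + 1)) * ‖v‖ ^ 2) ≤ ε / 2 * ‖v‖ ^ 2 := by
    rw [← mul_assoc]; gcongr
    rw [mul_div_assoc', div_le_div_iff₀ (by positivity) (by positivity)]
    nlinarith
  have h5 : D * (ε / (2 * (D + 1)) * ‖v‖ ^ 2) ≤ ε / 2 * ‖v‖ ^ 2 := by
    rw [← mul_assoc]; gcongr
    rw [mul_div_assoc', div_le_div_iff₀ (by positivity) (by positivity)]
    nlinarith
  simp only [hq] at h2'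
  linarith

lemma neg_log_bound (t : ℝ) (ht : |t| ≤ 1 / 8) : -Real.log (1 + t) ≤ -t + t ^ 2 := by
  have h := Real.abs_log_sub_add_sum_range_le (x := -t) (by rw [abs_neg]; linarith) 2
  rw [abs_neg] at h
  simp [Finset.sum_range_succ] at h
  have h1 := (abs_le.mp h).1
  have h2 : |t| ^ 3 / (1 - |t|) ≤ t ^ 2 / 2 := by
    rw [div_le_iff₀ (by linarith)]
    have : |t| ^ 3 = |t| * t ^ 2 := by rw [pow_succ, sq_abs, mul_comm]
    rw [this]
    nlinarith [sq_nonneg t]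
  norm_num at h1 h2 ⊢
  linarith

end touch

section notouch
variable {n : ℕ}

set_option maxHeartbeats 4000000 in
lemma no_touch {r : ℕ} (Ω : Set (EuclideanSpace ℝ (Fin n)))
    (hc : IsCompact (frontier Ω)) (hne : (frontier Ω).Nonempty)
    (b : EuclideanSpace ℝ (Fin n) → EuclideanSpace ℝ (Fin n))
    (s : Fin r → EuclideanSpace ℝ (Fin n) → EuclideanSpace ℝ (Fin n))
    (B C k lam δ0 : ℝ) (hB : 0 < B) (hC : 0 ≤ C) (hk : 0 < k) (hlam : 0 < lam)
    (hbL : ∀ x ∈ closure Ω, ∀ y ∈ closure Ω, ‖b x - b y‖ ≤ B * ‖x - y‖)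
    (hsL : ∀ j, ∀ x ∈ closure Ω, ∀ y ∈ closure Ω, ‖s j x - s j y‖ ≤ B * ‖x - y‖)
    (hbC : ∀ x ∈ closure Ω, ‖b x‖ ≤ C)
    (hsC : ∀ j, ∀ x ∈ closure Ω, ‖s j x‖ ≤ C)
    (xh z : EuclideanSpace ℝ (Fin n)) (hxh : xh ∈ Ω) (dh : ℝ) (hdh : bdist Ω xh = dh)
    (hd0 : 0 < dh) (hz : ‖xh - z‖ = dh) (hδ : 8 * dh < δ0)
    (hsub : ∀ x ∈ Ω ∩ Metric.ball z δ0, ∀ pY ∈ J2plus (closure Ω) (bdist Ω) x,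
      k ≤ ⟪b x, pY.1⟫_ℝ + ∑ j, quadForm pY.2 (s j x))
    (hperp : ∀ w ∈ frontier Ω ∩ Metric.ball z δ0, ∀ ν ∈ normalDirs Ω w, ∀ j, ⟪s j w, ν⟫_ℝ = 0)
    (hsmall : dh * (8 * (64 * r * B ^ 2 + 2)) ≤ k)
    (u : EuclideanSpace ℝ (Fin n) → ℝ) (hu : UpperSemicontinuousOn u Ω)
    (hmax : ∀ᶠ x in nhds xh, u x + lam * Real.log (bdist Ω x) ≤ u xh + lam * Real.log dh)
    (husub : ∀ x ∈ Ω, ∀ pX ∈ J2plus Ω u x, 0 ≤ ⟪b x, pX.1⟫_ℝ + ∑ j, quadForm pX.2 (s j x)) :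
    False := by
  obtain ⟨ρ1, hρ1, hmax⟩ := Metric.eventually_nhds_iff_ball.mp hmax
  obtain ⟨ρ, hρ, hρa, hρb⟩ : ∃ ρ : ℝ, 0 < ρ ∧ ρ ≤ dh / 64 ∧ ρ < ρ1 :=
    ⟨min (dh / 64) (ρ1 / 2), by positivity, min_le_left _ _,
      (min_le_right _ _).trans_lt (by linarith)⟩
  -- geometry on the ball of radius `2ρ`
  have geo : ∀ y, ‖y - xh‖ ≤ dh / 32 → y ∈ Ω ∧ bdist Ω y ≤ dh + ‖y - xh‖ ∧
      dh - ‖y - xh‖ ≤ bdist Ω y := by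
    intro y hy
    refine ⟨bd_ball_sub Ω xh y hxh (by rw [hdh]; linarith), ?_, ?_⟩
    · have := bdist_lip Ω y xh; rwa [hdh] at this
    · have := bdist_lip Ω xh y; rw [hdh, norm_sub_rev] at this; linarith
  have geo2 : ∀ y ∈ Metric.closedBall xh (2 * ρ), ‖y - xh‖ ≤ dh / 32 := by
    intro y hy
    rw [mem_closedBall_iff_norm] at hy; linarith
  have hcl : ∀ y ∈ Metric.closedBall xh (2 * ρ), y ∈ closure Ω := fun y hy =>
    subset_closure (geo y (geo2 y hy)).1
  have hyz : ∀ y ∈ Metric.closedBall xh (2 * ρ), bdist Ω y + ‖y - z‖ < δ0 := by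
    intro y hy
    have h1 := geo2 y hy
    have h2 := (geo y h1).2.1
    have h3 : ‖y - z‖ ≤ ‖y - xh‖ + ‖xh - z‖ := norm_sub_le_norm_sub_add_norm_sub _ _ _
    linarith
  set gh : ℝ := dh ^ 2 / 2 with hgh
  have hgh0 : 0 < gh := by positivity
  set κ : ℝ := lam / (2 * (C * ρ + r * C ^ 2 + 1)) with hκ
  have hκ0 : 0 < κ := by positivity
  have hκ1 : 2 * κ * (C * ρ + r * C ^ 2) ≤ lam := by
    have hden : 0 < C * ρ + r * C ^ 2 + 1 := by positivity
    have : 2 * κ * (C * ρ + r * C ^ 2 + 1) = lam := by rw [hκ]; field_simp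
    nlinarith
  obtain ⟨e, he, he1, he2, he3, he4⟩ : ∃ e : ℝ, 0 < e ∧ e ≤ k * dh / 4 ∧ e ≤ 2 * B * dh ^ 2 ∧
      e ≤ gh / 16 ∧ e ≤ κ * ρ ^ 2 * gh / (4 * lam) := by
    refine ⟨min (min (k * dh / 4) (2 * B * dh ^ 2)) (min (gh / 16) (κ * ρ ^ 2 * gh / (4 * lam))),
      by positivity, ?_, ?_, ?_, ?_⟩
    · exact (min_le_left _ _).trans (min_le_left _ _)
    · exact (min_le_left _ _).trans (min_le_right _ _)
    · exact (min_le_right _ _).trans (min_le_left _ _)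
    · exact (min_le_right _ _).trans (min_le_right _ _)
  obtain ⟨R, hR⟩ := hc.isBounded.exists_norm_le
  have hR0 : 0 ≤ R := by
    obtain ⟨w, hw⟩ := hne
    exact (norm_nonneg _).trans (hR w hw)
  obtain ⟨H, hH1, hHc, hH2⟩ := smooth_approx (hfun Ω) R hR0 (hfun_conv Ω hc hne)
    (hfun_lip Ω hc hne R hR) b s xh ρ B C hρ hB.le hC
    (fun x hx y hy => hbL x (hcl x hx) y (hcl y hy))
    (fun j x hx y hy => hsL j x (hcl x hx) y (hcl y hy))
    (fun x hx => hbC x (hcl x hx)) (fun j x hx => hsC j x (hcl x hx))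
    (k * dh / 2) (2 * B * dh ^ 2)
    (by
      intro y hy p X hX hj
      have h1 := geo2 y hy
      obtain ⟨g1, g2, g3⟩ := geo y h1
      have hdy : 0 < bdist Ω y := by linarith
      have hball : y ∈ Metric.ball z δ0 := by
        rw [mem_ball_iff_norm]; linarith [hyz y hy]
      have h2 := hsub y ⟨g1, hball⟩ _ (jet_of_hfun Ω y hdy p X hX hj)
      simp only at h2
      simp only [quadForm_combo] at h2
      rw [real_inner_smul_right, ← Finset.mul_sum, ← mul_add] at h2
      have h3 : bdist Ω y * k ≤ ⟪b y, y - p⟫_ℝ + ∑ j, (‖s j y‖ ^ 2 - quadForm X (s j y)) := by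
        have := mul_le_mul_of_nonneg_left h2 hdy.le
        rwa [← mul_assoc, mul_inv_cancel₀ hdy.ne', one_mul] at this
      refine le_trans ?_ h3
      nlinarith)
    (by
      intro y hy p hp j
      have h1 := geo2 y hy
      obtain ⟨g1, g2, g3⟩ := geo y h1
      have hdy : 0 < bdist Ω y := by linarith
      have h2 := tangential Ω hc hne (s j) B hB.le δ0 z y p g1 hdy (hyz y hy)
        (fun w hw => hsL j y (hcl y hy) w (frontier_subset_closure hw))
        (fun w hw ν hν => hperp w hw ν hν j) hp
      refine h2.trans ?_
      have : bdist Ω y ^ 2 ≤ 2 * dh ^ 2 := by nlinarith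
      nlinarith) e he
  set S : ℝ → ℝ := fun t => lam / 2 * (-t + t ^ 2) with hS
  set tp : EuclideanSpace ℝ (Fin n) → ℝ := fun x => (‖x‖ ^ 2 / 2 - H x - gh) / gh with htp
  set td : EuclideanSpace ℝ (Fin n) → ℝ := fun x => (bdist Ω x ^ 2 / 2 - gh) / gh with htd
  have hSc : Continuous fun x => S (tp x) := by
    simp only [hS, htp]; fun_prop
  have htd8 : ∀ x ∈ Metric.closedBall xh ρ, |td x| ≤ 1 / 8 := by
    intro x hx
    rw [mem_closedBall_iff_norm] at hx
    obtain ⟨g1, g2, g3⟩ := geo x (by linarith)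
    simp only [htd]
    rw [abs_div, abs_of_pos hgh0, div_le_iff₀ hgh0, abs_le, hgh]
    constructor <;> nlinarith
  have htpd : ∀ x, |tp x - td x| ≤ e / gh := by
    intro x
    have : tp x - td x = -(H x - hfun Ω x) / gh := by
      simp only [htp, htd, hfun]; field_simp; ring
    rw [this, abs_div, abs_neg, abs_of_pos hgh0]
    gcongr
    exact hH1 x
  have heg : e / gh ≤ 1 / 16 := by rw [div_le_iff₀ hgh0]; linarith
  have hSd : ∀ x ∈ Metric.closedBall xh ρ, |S (tp x) - S (td x)| ≤ lam * (e / gh) := by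
    intro x hx
    have h1 := htd8 x hx
    have h2 := htpd x
    have h3 : S (tp x) - S (td x) = lam / 2 * ((tp x - td x) * (-1 + tp x + td x)) := by
      simp only [hS]; ring
    have h4 : |-1 + tp x + td x| ≤ 2 := by
      have := abs_le.mp h1
      have := abs_le.mp (h2.trans heg)
      rw [abs_le]; constructor <;> linarith
    rw [h3, abs_mul, abs_mul, abs_of_pos (by positivity : 0 < lam / 2)]
    calc _ ≤ lam / 2 * (e / gh * 2) := by gcongr
      _ = _ := by ring
  -- the function u - S∘t has a max at xh
  have hut : ∀ x ∈ Metric.closedBall xh ρ, u x ≤ u xh + S (td x) := by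
    intro x hx
    have h1 := htd8 x hx
    have h2 := neg_log_bound _ h1
    have hxn := hx
    rw [mem_closedBall_iff_norm] at hxn
    obtain ⟨g1, g2, g3⟩ := geo x (by linarith)
    have h3 := hmax x (Metric.closedBall_subset_ball hρb hx)
    have h4 : 1 + td x = (bdist Ω x / dh) ^ 2 := by
      simp only [htd, hgh]; field_simp; ring
    rw [h4, Real.log_pow, Real.log_div (by linarith) hd0.ne'] at h2
    push_cast at h2
    have := mul_le_mul_of_nonneg_left h2 (by positivity : 0 ≤ lam / 2)
    simp only [hS]
    linarith
  obtain ⟨x0, hx0, hx0max⟩ := UpperSemicontinuousOn.exists_isMaxOn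
    (f := fun x => u x + (-(S (tp x)) - κ * ‖x - xh‖ ^ 2))
    (s := Metric.closedBall xh ρ) ⟨xh, Metric.mem_closedBall_self hρ.le⟩
    (isCompact_closedBall _ _)
    (by
      refine UpperSemicontinuousOn.add (hu.mono ?_) ?_
      · intro y hy
        refine (geo y ?_).1
        rw [mem_closedBall_iff_norm] at hy; linarith
      · have : Continuous fun x => -(S (tp x)) - κ * ‖x - xh‖ ^ 2 := by fun_prop
        exact this.continuousOn.upperSemicontinuousOn)
  have hx0lt : ‖x0 - xh‖ < ρ := by
    have h1 := hx0max (Metric.mem_closedBall_self hρ.le : xh ∈ Metric.closedBall xh ρ)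
    simp only [Set.mem_ofPred_eq, sub_self, norm_zero] at h1
    have h2 := hut x0 hx0
    have h3 := abs_le.mp (hSd x0 hx0)
    have h4 := abs_le.mp (hSd xh (Metric.mem_closedBall_self hρ.le))
    have h5 : S (td xh) = 0 := by simp [hS, htd, hdh, hgh]
    rw [h5] at h4
    have h6 : κ * ‖x0 - xh‖ ^ 2 ≤ 2 * (lam * (e / gh)) := by
      norm_num at h1
      linarith [h3.1, h4.2]
    have h7 : 2 * (lam * (e / gh)) ≤ κ * ρ ^ 2 / 2 := by
      rw [le_div_iff₀ (by positivity)] at he4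
      rw [mul_div_assoc', mul_div_assoc', div_le_iff₀ hgh0]
      linarith
    have h8 : κ * ‖x0 - xh‖ ^ 2 < κ * ρ ^ 2 := by
      have : 0 < κ * ρ ^ 2 := by positivity
      linarith
    exact lt_of_pow_lt_pow_left₀ 2 hρ.le (lt_of_mul_lt_mul_left h8 hκ0.le)
  obtain ⟨P, X, hX, hPX, hin1, hin2⟩ := hH2 x0 hx0
  have htp0 : tp x0 ≤ 3 / 16 := by
    have := abs_le.mp (htd8 x0 hx0)
    have := abs_le.mp ((htpd x0).trans heg)
    linarith
  set A : ℝ := lam / (2 * gh) * (1 - 2 * tp x0) with hA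
  set D : ℝ := lam / (2 * gh ^ 2) with hD
  have hA0 : lam / (4 * gh) ≤ A := by
    have : lam / (4 * gh) = lam / (2 * gh) * (1 / 2) := by field_simp; norm_num
    rw [this, hA]
    gcongr
    linarith
  have hA1 : 0 ≤ A := le_trans (by positivity) hA0
  have hD0 : 0 ≤ D := by positivity
  have hx0Ω : x0 ∈ Ω := (geo x0 (by linarith)).1
  have hjet := jet_compose Ω u H x0 xh P X hX hPX A D κ hA1 hD0 (by
    have ht : Tendsto (fun v : EuclideanSpace ℝ (Fin n) => ‖x0 + v - xh‖) (nhds 0)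
        (nhds ‖x0 + 0 - xh‖) :=
      (by fun_prop : Continuous fun v : EuclideanSpace ℝ (Fin n) => ‖x0 + v - xh‖).tendsto 0
    rw [add_zero] at ht
    filter_upwards [ht.eventually_lt_const hx0lt] with v hv
    have h1 := hx0max (mem_closedBall_iff_norm.mpr hv.le)
    simp only [Set.mem_ofPred_eq] at h1
    have h2 : ‖x0 + v - xh‖ ^ 2 = ‖x0 - xh‖ ^ 2 + 2 * ⟪x0 - xh, v⟫_ℝ + ‖v‖ ^ 2 := by
      rw [add_sub_right_comm, norm_add_sq_real]
    have h3 : ‖x0 + v‖ ^ 2 = ‖x0‖ ^ 2 + 2 * ⟪x0, v⟫_ℝ + ‖v‖ ^ 2 := norm_add_sq_real _ _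
    have h4 : S (tp (x0 + v)) - S (tp x0) =
      - A * (⟪x0, v⟫_ℝ + ‖v‖ ^ 2 / 2 - (H (x0 + v) - H x0))
      + D * (⟪x0, v⟫_ℝ + ‖v‖ ^ 2 / 2 - (H (x0 + v) - H x0)) ^ 2 := by
      have h5 : tp (x0 + v)
          = tp x0 + (⟪x0, v⟫_ℝ + ‖v‖ ^ 2 / 2 - (H (x0 + v) - H x0)) / gh := by
        simp only [htp]; rw [h3]; field_simp; ring
      rw [h5, hA, hD]
      simp only [hS]
      field_simp
      ring
    rw [h2] at h1
    linarith)
  have hfin := husub x0 hx0Ω _ hjet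
  simp only [quadForm_jetM] at hfin
  rw [inner_add_right, real_inner_smul_right, real_inner_smul_right, Finset.sum_add_distrib,
    Finset.sum_add_distrib, ← Finset.mul_sum, ← Finset.mul_sum, ← Finset.mul_sum] at hfin
  have hx0c := subset_closure hx0Ω
  have f1 : ⟪b x0, x0 - xh⟫_ℝ ≤ C * ρ := by
    refine (real_inner_le_norm _ _).trans ?_
    have := hbC x0 hx0c
    gcongr
  have f2 : ∑ j, ‖s j x0‖ ^ 2 ≤ r * C ^ 2 := by
    refine (Finset.sum_le_card_nsmul _ _ (C ^ 2) ?_).trans ?_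
    · intro j _
      have := hsC j x0 hx0c
      gcongr
    · simp
  have f3 : ∑ j, ⟪x0 - P, s j x0⟫_ℝ ^ 2 ≤ r * (4 * B * dh ^ 2) ^ 2 := by
    refine (Finset.sum_le_card_nsmul _ _ ((4 * B * dh ^ 2) ^ 2) ?_).trans ?_
    · intro j _
      have := hin2 j
      rw [real_inner_comm, ← sq_abs]
      gcongr
      linarith
    · simp
  have f4 : 2 * D * ∑ j, ⟪x0 - P, s j x0⟫_ℝ ^ 2 ≤ 64 * lam * r * B ^ 2 := by
    calc _ ≤ 2 * D * (r * (4 * B * dh ^ 2) ^ 2) := by gcongr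
      _ = _ := by rw [hD, hgh]; field_simp; ring
  have f5 : lam * k / (8 * dh) ≤
      A * (⟪b x0, x0 - P⟫_ℝ + ∑ j, (‖s j x0‖ ^ 2 - quadForm X (s j x0))) := by
    calc lam * k / (8 * dh) = lam / (4 * gh) * (k * dh / 4) := by rw [hgh]; field_simp; norm_num
      _ ≤ A * (k * dh / 4) := by gcongr
      _ ≤ _ := by gcongr; linarith
  have f6 : lam * (64 * r * B ^ 2 + 2) ≤ lam * k / (8 * dh) := by
    rw [le_div_iff₀ (by positivity)]
    nlinarith
  have f7 : 2 * κ * (⟪b x0, x0 - xh⟫_ℝ + ∑ j, ‖s j x0‖ ^ 2) ≤ lam := by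
    refine le_trans ?_ hκ1
    gcongr
  nlinarith

end notouch

section main
variable {n r : ℕ}

def colv (M : Matrix (Fin n) (Fin r) ℝ) (j : Fin r) : EuclideanSpace ℝ (Fin n) :=
  WithLp.toLp 2 (fun i => M i j)

lemma colv_apply (M : Matrix (Fin n) (Fin r) ℝ) (j : Fin r) (i : Fin n) : colv M j i = M i j := rfl

lemma trace_colv (M : Matrix (Fin n) (Fin r) ℝ) (X : Matrix (Fin n) (Fin n) ℝ) :
    Matrix.trace (M * Mᵀ * X) = ∑ j, quadForm X (colv M j) := by
  simp only [Matrix.trace, Matrix.diag, Matrix.mul_apply, quadForm, colv_apply,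
    Matrix.transpose_apply, Finset.sum_mul]
  rw [Finset.sum_comm]
  conv_rhs => rw [Finset.sum_comm]
  refine Finset.sum_congr rfl fun i _ => ?_
  rw [Finset.sum_comm]
  refine Finset.sum_congr rfl fun j _ => ?_
  refine Finset.sum_congr rfl fun k _ => ?_
  ring

lemma norm_colv_le (M : Matrix (Fin n) (Fin r) ℝ) (j : Fin r) : ‖colv M j‖ ≤ mnorm M := by
  rw [EuclideanSpace.norm_eq]
  unfold mnorm
  refine Real.sqrt_le_sqrt (Finset.sum_le_sum fun i _ => ?_)
  rw [colv_apply, Real.norm_eq_abs, sq_abs]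
  exact Finset.single_le_sum (f := fun j => M i j ^ 2) (fun _ _ => sq_nonneg _) (Finset.mem_univ j)

lemma colv_sub (M N : Matrix (Fin n) (Fin r) ℝ) (j : Fin r) :
    colv M j - colv N j = colv (M - N) j := by
  ext i; simp [colv_apply]

lemma inner_colv (M : Matrix (Fin n) (Fin r) ℝ) (ν : EuclideanSpace ℝ (Fin n)) (j : Fin r) :
    ⟪colv M j, ν⟫_ℝ = sigmaT M ν j := by
  simp [PiLp.inner_apply, sigmaT, Matrix.mulVec, dotProduct, colv_apply, mul_comm]

lemma Fop_le {m : ℕ} (A : Set (Fin m → ℝ))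
    (b : EuclideanSpace ℝ (Fin n) → (Fin m → ℝ) → EuclideanSpace ℝ (Fin n))
    (σ : EuclideanSpace ℝ (Fin n) → (Fin m → ℝ) → Matrix (Fin n) (Fin r) ℝ)
    (x p : EuclideanSpace ℝ (Fin n)) (X : Matrix (Fin n) (Fin n) ℝ) (C : ℝ)
    (hb : ∀ α ∈ A, ‖b x α‖ ≤ C) (hs : ∀ α ∈ A, mnorm (σ x α) ≤ C)
    (hF : Fop A b σ x p X ≤ 0) (α : Fin m → ℝ) (hα : α ∈ A) :
    0 ≤ ⟪b x α, p⟫_ℝ + ∑ j, quadForm X (colv (σ x α) j) := by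
  have hbdd : BddAbove
      ((fun α => -⟪b x α, p⟫_ℝ - Matrix.trace (σ x α * (σ x α)ᵀ * X)) '' A) := by
    refine ⟨C * ‖p‖ + ∑ _j : Fin r, (∑ i, ∑ j, |X i j|) * C ^ 2, ?_⟩
    rintro _ ⟨β, hβ, rfl⟩
    simp only
    rw [trace_colv]
    have h1 := (abs_le.mp (abs_real_inner_le_norm (b x β) p)).1
    have h2 : ‖b x β‖ * ‖p‖ ≤ C * ‖p‖ := by gcongr; exact hb β hβ
    have h3 : |∑ j, quadForm X (colv (σ x β) j)| ≤ ∑ _j : Fin r, (∑ i, ∑ j, |X i j|) * C ^ 2 := by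
      refine (Finset.abs_sum_le_sum_abs _ _).trans (Finset.sum_le_sum fun j _ => ?_)
      refine (quadForm_abs _ _).trans ?_
      have := (norm_colv_le (σ x β) j).trans (hs β hβ)
      gcongr
    have h4 := (abs_le.mp h3).1
    linarith
  have h := (le_csSup hbdd ⟨α, hα, rfl⟩).trans hF
  simp only at h
  rw [trace_colv] at h
  linarith

lemma unif_cond {m : ℕ} (Ω : Set (EuclideanSpace ℝ (Fin n))) (hc : IsCompact (frontier Ω))
    (A : Set (Fin m → ℝ))
    (b : EuclideanSpace ℝ (Fin n) → (Fin m → ℝ) → EuclideanSpace ℝ (Fin n))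
    (σ : EuclideanSpace ℝ (Fin n) → (Fin m → ℝ) → Matrix (Fin n) (Fin r) ℝ)
    (hcond : ∀ z ∈ frontier Ω, ∃ α₀ ∈ A, ∃ U : Set (EuclideanSpace ℝ (Fin n)),
      IsOpen U ∧ z ∈ U ∧ ∃ k > (0 : ℝ),
        (∀ x ∈ Ω ∩ U, ∀ pY ∈ J2plus (closure Ω) (bdist Ω) x,
          -⟪b x α₀, pY.1⟫_ℝ - Matrix.trace (σ x α₀ * (σ x α₀)ᵀ * pY.2) ≤ -k) ∧
        (∀ w ∈ frontier Ω ∩ U, ∀ ν ∈ normalDirs Ω w, sigmaT (σ w α₀) ν = 0)) :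
    ∃ δ > (0:ℝ), ∀ z ∈ frontier Ω, ∃ α ∈ A,
        (∀ x ∈ Ω ∩ Metric.ball z δ, ∀ pY ∈ J2plus (closure Ω) (bdist Ω) x,
          δ ≤ ⟪b x α, pY.1⟫_ℝ + ∑ j, quadForm pY.2 (colv (σ x α) j)) ∧
        (∀ w ∈ frontier Ω ∩ Metric.ball z δ, ∀ ν ∈ normalDirs Ω w,
          ∀ j, ⟪colv (σ w α) j, ν⟫_ℝ = 0) := by
  have mono : ∀ (z : EuclideanSpace ℝ (Fin n)) (α : Fin m → ℝ) (δ δ' : ℝ), δ' ≤ δ →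
      ((∀ x ∈ Ω ∩ Metric.ball z δ, ∀ pY ∈ J2plus (closure Ω) (bdist Ω) x,
          δ ≤ ⟪b x α, pY.1⟫_ℝ + ∑ j, quadForm pY.2 (colv (σ x α) j)) ∧
        (∀ w ∈ frontier Ω ∩ Metric.ball z δ, ∀ ν ∈ normalDirs Ω w,
          ∀ j, ⟪colv (σ w α) j, ν⟫_ℝ = 0)) →
      ((∀ x ∈ Ω ∩ Metric.ball z δ', ∀ pY ∈ J2plus (closure Ω) (bdist Ω) x,
          δ' ≤ ⟪b x α, pY.1⟫_ℝ + ∑ j, quadForm pY.2 (colv (σ x α) j)) ∧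
        (∀ w ∈ frontier Ω ∩ Metric.ball z δ', ∀ ν ∈ normalDirs Ω w,
          ∀ j, ⟪colv (σ w α) j, ν⟫_ℝ = 0)) := by
    rintro z α δ δ' hle ⟨h1, h2⟩
    refine ⟨fun x hx pY hpY => hle.trans (h1 x ⟨hx.1, Metric.ball_subset_ball hle hx.2⟩ pY hpY),
      fun w hw => h2 w ⟨hw.1, Metric.ball_subset_ball hle hw.2⟩⟩
  refine hc.induction_on (p := fun s => ∃ δ > (0:ℝ), ∀ z ∈ s, ∃ α ∈ A,
        (∀ x ∈ Ω ∩ Metric.ball z δ, ∀ pY ∈ J2plus (closure Ω) (bdist Ω) x,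
          δ ≤ ⟪b x α, pY.1⟫_ℝ + ∑ j, quadForm pY.2 (colv (σ x α) j)) ∧
        (∀ w ∈ frontier Ω ∩ Metric.ball z δ, ∀ ν ∈ normalDirs Ω w,
          ∀ j, ⟪colv (σ w α) j, ν⟫_ℝ = 0)) ?_ ?_ ?_ ?_
  · exact ⟨1, one_pos, fun z hz => hz.elim⟩
  · rintro s t hst ⟨δ, hδ, h⟩
    exact ⟨δ, hδ, fun z hz => h z (hst hz)⟩
  · rintro s t ⟨δ, hδ, h⟩ ⟨δ', hδ', h'⟩
    refine ⟨min δ δ', lt_min hδ hδ', ?_⟩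
    rintro z (hz | hz)
    · obtain ⟨α, hα, hh⟩ := h z hz
      exact ⟨α, hα, mono z α _ _ (min_le_left _ _) hh⟩
    · obtain ⟨α, hα, hh⟩ := h' z hz
      exact ⟨α, hα, mono z α _ _ (min_le_right _ _) hh⟩
  · intro z hz
    obtain ⟨α, hα, U, hU, hzU, k, hk, h1, h2⟩ := hcond z hz
    obtain ⟨ρ, hρ, hρU⟩ := Metric.isOpen_iff.mp hU z hzU
    refine ⟨Metric.ball z (ρ / 2), mem_nhdsWithin_of_mem_nhds (Metric.ball_mem_nhds _ (by positivity)),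
      min (ρ / 2) k, by positivity, ?_⟩
    intro w hw
    have hsub : Metric.ball w (min (ρ / 2) k) ⊆ U := by
      intro y hy
      apply hρU
      rw [Metric.mem_ball] at hw hy ⊢
      have := dist_triangle y w z
      have := min_le_left (ρ / 2) k
      linarith
    refine ⟨α, hα, ?_, ?_⟩
    · intro x hx pY hpY
      have := h1 x ⟨hx.1, hsub hx.2⟩ pY hpY
      rw [trace_colv] at this
      have := min_le_right (ρ / 2) k
      linarith
    · intro x hx ν hν j
      rw [inner_colv, h2 x ⟨hx.1, hsub hx.2⟩ ν hν]; rfl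

/-- The comparison step near the boundary. -/
lemma near_bound (Ω : Set (EuclideanSpace ℝ (Fin n))) (hΩo : IsOpen Ω)
    (hΩbdd : Bornology.IsBounded Ω) (hne : (frontier Ω).Nonempty)
    (u : EuclideanSpace ℝ (Fin n) → ℝ) (hu : UpperSemicontinuousOn u Ω)
    (hgrowth : ∀ ε > (0 : ℝ), ∃ δ, 0 < δ ∧ δ < 1 ∧
      ∀ x ∈ Ω, bdist Ω x < δ → u x ≤ ε * (-Real.log (bdist Ω x)))
    (δ M lam : ℝ) (hlam : 0 < lam)
    (hM : ∀ x ∈ Ω, δ ≤ bdist Ω x → u x ≤ M)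
    (hno : ∀ xh ∈ Ω, bdist Ω xh < δ →
      ¬ ∀ᶠ x in nhds xh, u x + lam * Real.log (bdist Ω x) ≤ u xh + lam * Real.log (bdist Ω xh))
    (x1 : EuclideanSpace ℝ (Fin n)) (hx1 : x1 ∈ Ω) (hx1d : bdist Ω x1 < δ) :
    u x1 + lam * Real.log (bdist Ω x1) ≤ M + lam * Real.log δ := by
  by_contra hcon
  push Not at hcon
  set Φ : EuclideanSpace ℝ (Fin n) → ℝ := fun x => u x + lam * Real.log (bdist Ω x) with hΦ
  obtain ⟨δ1, hδ1, -, hg⟩ := hgrowth (lam / 2) (by positivity)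
  obtain ⟨δ2, hδ2, hδ21, hδexp⟩ : ∃ δ2 : ℝ, 0 < δ2 ∧ δ2 ≤ δ1 ∧ δ2 ≤ Real.exp (2 * Φ x1 / lam) :=
    ⟨min δ1 (Real.exp (2 * Φ x1 / lam)), lt_min hδ1 (Real.exp_pos _), min_le_left _ _,
      min_le_right _ _⟩
  have hpos : ∀ x ∈ Ω, 0 < bdist Ω x := bdist_pos Ω hΩo hne
  have hlow : ∀ x ∈ Ω, bdist Ω x < δ2 → Φ x < Φ x1 := by
    intro x hx hxd
    have h1 := hg x hx (by linarith)
    have h2 : Real.log (bdist Ω x) < 2 * Φ x1 / lam := by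
      rw [Real.log_lt_iff_lt_exp (hpos x hx)]; linarith
    rw [lt_div_iff₀ hlam] at h2
    have : Φ x = u x + lam * Real.log (bdist Ω x) := rfl
    linarith
  set K : Set (EuclideanSpace ℝ (Fin n)) := closure Ω ∩ (bdist Ω) ⁻¹' (Set.Icc δ2 δ) with hK
  have hKc : IsCompact K :=
    hΩbdd.isCompact_closure.inter_right (isClosed_Icc.preimage (bdist_cont Ω))
  have hKΩ : K ⊆ Ω := by
    rintro x ⟨hx, hxd⟩
    by_contra hxn
    have hf : x ∈ frontier Ω := by rw [hΩo.frontier_eq]; exact ⟨hx, hxn⟩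
    have : bdist Ω x = 0 := Metric.infDist_zero_of_mem hf
    have := hxd.1
    linarith
  have hx1K : x1 ∈ K := by
    refine ⟨subset_closure hx1, ?_, hx1d.le⟩
    by_contra h
    exact lt_irrefl _ (hlow x1 hx1 (not_le.mp h))
  obtain ⟨xh, hxh, hxmax⟩ := UpperSemicontinuousOn.exists_isMaxOn (f := Φ) ⟨x1, hx1K⟩ hKc (by
    refine UpperSemicontinuousOn.add (hu.mono hKΩ) (ContinuousOn.upperSemicontinuousOn ?_)
    refine continuousOn_const.mul (ContinuousOn.log (bdist_cont Ω).continuousOn ?_)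
    intro x hx
    exact (hpos x (hKΩ hx)).ne')
  have hge : Φ x1 ≤ Φ xh := hxmax hx1K
  have hxhΩ := hKΩ hxh
  have hxhd : bdist Ω xh < δ := by
    refine lt_of_le_of_ne hxh.2.2 ?_
    intro heq
    have h1 := hM xh hxhΩ heq.ge
    have h2 : Φ xh = u xh + lam * Real.log δ := by simp only [hΦ]; rw [heq]
    have h3 : Φ x1 = u x1 + lam * Real.log (bdist Ω x1) := rfl
    linarith
  refine hno xh hxhΩ hxhd ?_
  filter_upwards [hΩo.mem_nhds hxhΩ, ((bdist_cont Ω).tendsto xh).eventually_lt_const hxhd]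
    with x hx hxd
  by_cases h : bdist Ω x < δ2
  · exact (hlow x hx h).le.trans hge
  · exact hxmax (show x ∈ K from ⟨subset_closure hx, not_lt.mp h, hxd.le⟩)

end main

theorem statement_9
    {n m r : ℕ} (Ω : Set (EuclideanSpace ℝ (Fin n)))
    (hΩo : IsOpen Ω) (hΩconn : IsConnected Ω) (hΩbdd : Bornology.IsBounded Ω)
    (A : Set (Fin m → ℝ)) (hA : IsClosed A) (hAne : A.Nonempty)
    (b : EuclideanSpace ℝ (Fin n) → (Fin m → ℝ) → EuclideanSpace ℝ (Fin n))
    (σ : EuclideanSpace ℝ (Fin n) → (Fin m → ℝ) → Matrix (Fin n) (Fin r) ℝ)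
    (hbBdd : ∃ C, ∀ x ∈ closure Ω, ∀ α ∈ A, ‖b x α‖ ≤ C)
    (hσBdd : ∃ C, ∀ x ∈ closure Ω, ∀ α ∈ A, mnorm (σ x α) ≤ C)
    (hbCont : ContinuousOn (fun q : EuclideanSpace ℝ (Fin n) × (Fin m → ℝ) => b q.1 q.2)
      (closure Ω ×ˢ A))
    (hσCont : ContinuousOn (fun q : EuclideanSpace ℝ (Fin n) × (Fin m → ℝ) => σ q.1 q.2)
      (closure Ω ×ˢ A))
    (B : ℝ) (hB : 0 < B)
    (hbLip : ∀ x ∈ closure Ω, ∀ y ∈ closure Ω, ∀ α ∈ A, ‖b x α - b y α‖ ≤ B * ‖x - y‖)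
    (hσLip : ∀ x ∈ closure Ω, ∀ y ∈ closure Ω, ∀ α ∈ A,
      mnorm (σ x α - σ y α) ≤ B * ‖x - y‖)
    (hcond : ∀ z ∈ frontier Ω, ∃ α₀ ∈ A, ∃ U : Set (EuclideanSpace ℝ (Fin n)),
      IsOpen U ∧ z ∈ U ∧ ∃ k > (0 : ℝ),
        (∀ x ∈ Ω ∩ U, ∀ pY ∈ J2plus (closure Ω) (bdist Ω) x,
          -⟪b x α₀, pY.1⟫_ℝ - Matrix.trace (σ x α₀ * (σ x α₀)ᵀ * pY.2) ≤ -k) ∧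
        (∀ w ∈ frontier Ω ∩ U, ∀ ν ∈ normalDirs Ω w, sigmaT (σ w α₀) ν = 0))
    (hSMP : ∀ w : EuclideanSpace ℝ (Fin n) → ℝ, UpperSemicontinuousOn w Ω →
      (∀ x ∈ Ω, ∀ pX ∈ J2plus Ω w x, Fop A b σ x pX.1 pX.2 ≤ 0) →
      (∃ x₀ ∈ Ω, ∀ x ∈ Ω, w x ≤ w x₀) → ∀ x ∈ Ω, ∀ y ∈ Ω, w x = w y)
    (u : EuclideanSpace ℝ (Fin n) → ℝ) (hu : UpperSemicontinuousOn u Ω)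
    (husub : ∀ x ∈ Ω, ∀ pX ∈ J2plus Ω u x, Fop A b σ x pX.1 pX.2 ≤ 0)
    (hgrowth : ∀ ε > (0 : ℝ), ∃ δ, 0 < δ ∧ δ < 1 ∧
      ∀ x ∈ Ω, bdist Ω x < δ → u x ≤ ε * (-Real.log (bdist Ω x))) :
    ∀ x ∈ Ω, ∀ y ∈ Ω, u x = u y := by
  intro x hx y hy
  rcases subsingleton_or_nontrivial (EuclideanSpace ℝ (Fin n)) with hsub | hnt
  · rw [Subsingleton.elim x y]
  have hne : (frontier Ω).Nonempty := by
    rw [nonempty_frontier_iff]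
    refine ⟨⟨x, hx⟩, ?_⟩
    rintro rfl
    exact NormedSpace.unbounded_univ ℝ (EuclideanSpace ℝ (Fin n)) hΩbdd
  have hc : IsCompact (frontier Ω) :=
    hΩbdd.isCompact_closure.of_isClosed_subset isClosed_frontier frontier_subset_closure
  obtain ⟨C1, hC1⟩ := hbBdd
  obtain ⟨C2, hC2⟩ := hσBdd
  obtain ⟨C, hC0, hbC, hσC⟩ : ∃ C : ℝ, 0 ≤ C ∧ (∀ x ∈ closure Ω, ∀ α ∈ A, ‖b x α‖ ≤ C) ∧
      (∀ x ∈ closure Ω, ∀ α ∈ A, mnorm (σ x α) ≤ C) :=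
    ⟨max 0 (max C1 C2), le_max_left _ _,
      fun x hx α hα => (hC1 x hx α hα).trans ((le_max_left _ _).trans (le_max_right _ _)),
      fun x hx α hα => (hC2 x hx α hα).trans ((le_max_right _ _).trans (le_max_right _ _))⟩
  obtain ⟨δ0, hδ0, hunif⟩ := unif_cond Ω hc A b σ hcond
  have hpos : ∀ x ∈ Ω, 0 < bdist Ω x := bdist_pos Ω hΩo hne
  set T : ℝ := 8 * (64 * r * B ^ 2 + 2) with hT
  have hT0 : 0 < T := by positivity
  obtain ⟨δ, hδ, hδa, hδb, hδx⟩ : ∃ δ : ℝ, 0 < δ ∧ 8 * δ ≤ δ0 ∧ δ * T ≤ δ0 ∧ δ ≤ bdist Ω x := by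
    refine ⟨min (min (δ0 / 8) (δ0 / T)) (bdist Ω x), lt_min (by positivity) (hpos x hx), ?_, ?_,
      min_le_right _ _⟩
    · have := (min_le_left (min (δ0 / 8) (δ0 / T)) (bdist Ω x)).trans (min_le_left _ _)
      linarith
    · have := (min_le_left (min (δ0 / 8) (δ0 / T)) (bdist Ω x)).trans (min_le_right _ _)
      rwa [le_div_iff₀ hT0] at this
  have hKc : IsCompact (closure Ω ∩ (bdist Ω) ⁻¹' (Set.Ici δ)) :=
    hΩbdd.isCompact_closure.inter_right (isClosed_Ici.preimage (bdist_cont Ω))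
  have hKΩ : closure Ω ∩ (bdist Ω) ⁻¹' (Set.Ici δ) ⊆ Ω := by
    rintro w ⟨hw, hwd⟩
    by_contra hwn
    have hf : w ∈ frontier Ω := by rw [hΩo.frontier_eq]; exact ⟨hw, hwn⟩
    have h0 : bdist Ω w = 0 := Metric.infDist_zero_of_mem hf
    have h1 : δ ≤ bdist Ω w := hwd
    linarith
  obtain ⟨xm, hxm, hxmax⟩ := UpperSemicontinuousOn.exists_isMaxOn
    (f := u) (s := closure Ω ∩ (bdist Ω) ⁻¹' (Set.Ici δ)) ⟨x, subset_closure hx, hδx⟩ hKc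
    (hu.mono hKΩ)
  have hM : ∀ w ∈ Ω, δ ≤ bdist Ω w → u w ≤ u xm := fun w hw hwd => hxmax ⟨subset_closure hw, hwd⟩
  have hno : ∀ lam > (0:ℝ), ∀ xh ∈ Ω, bdist Ω xh < δ →
      ¬ ∀ᶠ x in nhds xh, u x + lam * Real.log (bdist Ω x)
        ≤ u xh + lam * Real.log (bdist Ω xh) := by
    intro lam hlam xh hxh hxhd hmax
    obtain ⟨z, hz, hdz, -⟩ := hfun_proj Ω hc hne xh
    obtain ⟨α, hα, hα1, hα2⟩ := hunif z hz
    refine no_touch Ω hc hne (fun x => b x α) (fun j x => colv (σ x α) j) B C δ0 lam δ0 hB hC0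
      hδ0 hlam (fun x hx y hy => hbLip x hx y hy α hα)
      (fun j x hx y hy => ?_) (fun x hx => hbC x hx α hα)
      (fun j x hx => (norm_colv_le _ _).trans (hσC x hx α hα))
      xh z hxh (bdist Ω xh) rfl (hpos xh hxh) hdz.symm (by linarith) hα1 hα2 ?_ u hu hmax ?_
    · simp only [colv_sub]
      exact (norm_colv_le _ _).trans (hσLip x hx y hy α hα)
    · refine le_trans ?_ hδb
      exact mul_le_mul_of_nonneg_right hxhd.le hT0.le
    · intro w hw pX hpX
      exact Fop_le A b σ w pX.1 pX.2 C (fun α hα => hbC w (subset_closure hw) α hα)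
        (fun α hα => hσC w (subset_closure hw) α hα) (husub w hw pX hpX) α hα
  refine hSMP u hu husub ⟨xm, hKΩ hxm, ?_⟩ x hx y hy
  intro w hw
  by_cases hwd : δ ≤ bdist Ω w
  · exact hM w hw hwd
  push Not at hwd
  have key : ∀ lam > (0:ℝ), u w ≤ u xm + lam * (Real.log δ - Real.log (bdist Ω w)) := by
    intro lam hlam
    have := near_bound Ω hΩo hΩbdd hne u hu hgrowth δ (u xm) lam hlam hM (hno lam hlam) w hw hwd
    linarith
  have hlim : Tendsto (fun lam : ℝ => u xm + lam * (Real.log δ - Real.log (bdist Ω w)))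
      (nhdsWithin 0 (Set.Ioi 0)) (nhds (u xm + 0 * (Real.log δ - Real.log (bdist Ω w)))) :=
    ((by fun_prop : Continuous fun lam : ℝ =>
      u xm + lam * (Real.log δ - Real.log (bdist Ω w))).tendsto 0).mono_left nhdsWithin_le_nhds
  rw [zero_mul, add_zero] at hlim
  exact ge_of_tendsto hlim (eventually_mem_nhdsWithin.mono key)
end
end
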